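/- arXiv:2109.00502 — 10 statements merged into one kernel-verified Lean document; each statement's English description precedes it below -/
import Mathlib

section
/- For every integer k ≥ 2, there exists a bicrucial permutation of length 8k + 3. -/
/-- The permutation `σ` of length `n` has a square starting at position `k`
with half-length `ℓ`: the factors `(σ k, …, σ (k+ℓ-1))` and
`(σ (k+ℓ), …, σ (k+2ℓ-1))` are order-isomorphic. -/
def HasSquareAt {n : ℕ} (σ : Fin n → Fin n) (k ℓ : ℕ) : Prop :=
  2 ≤ ℓ ∧ ∃ hb : k + 2 * ℓ ≤ n, ∀ (i j : ℕ) (hi : i < ℓ) (hj : j < ℓ),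
    (σ ⟨k + i, by omega⟩ < σ ⟨k + j, by omega⟩ ↔
      σ ⟨k + ℓ + i, by omega⟩ < σ ⟨k + ℓ + j, by omega⟩)

/-- `σ` contains a square. -/
def ContainsSquare {n : ℕ} (σ : Fin n → Fin n) : Prop :=
  ∃ k ℓ : ℕ, HasSquareAt σ k ℓ

/-- `σ` is square-free: it contains no square. -/
def SquareFree {n : ℕ} (σ : Fin n → Fin n) : Prop :=
  ¬ ContainsSquare σ

/-- `π` (of length `n+1`) is a right-extension of `σ` (of length `n`):
the prefix `(π 0, …, π (n-1))` is order-isomorphic to `σ`. -/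
def IsRightExtension {n : ℕ} (σ : Fin n → Fin n) (π : Fin (n + 1) → Fin (n + 1)) : Prop :=
  ∀ i j : Fin n, π i.castSucc < π j.castSucc ↔ σ i < σ j

/-- `π` (of length `n+1`) is a left-extension of `σ` (of length `n`):
the suffix `(π 1, …, π n)` is order-isomorphic to `σ`. -/
def IsLeftExtension {n : ℕ} (σ : Fin n → Fin n) (π : Fin (n + 1) → Fin (n + 1)) : Prop :=
  ∀ i j : Fin n, π i.succ < π j.succ ↔ σ i < σ j

/-- `σ` is right-crucial: square-free, and every right-extension contains a square. -/
def RightCrucial {n : ℕ} (σ : Equiv.Perm (Fin n)) : Prop :=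
  SquareFree ⇑σ ∧ ∀ π : Equiv.Perm (Fin (n + 1)), IsRightExtension ⇑σ ⇑π → ContainsSquare ⇑π

/-- `σ` is left-crucial: square-free, and every left-extension contains a square. -/
def LeftCrucial {n : ℕ} (σ : Equiv.Perm (Fin n)) : Prop :=
  SquareFree ⇑σ ∧ ∀ π : Equiv.Perm (Fin (n + 1)), IsLeftExtension ⇑σ ⇑π → ContainsSquare ⇑π

/-- `σ` is bicrucial: both left-crucial and right-crucial. -/
def Bicrucial {n : ℕ} (σ : Equiv.Perm (Fin n)) : Prop :=
  LeftCrucial σ ∧ RightCrucial σ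

/-- Order-theoretic square of a sequence of values, with half-length `l`, starting at `q`. -/
def Sq {α : Type} [LT α] (s : ℕ → α) (q l : ℕ) : Prop :=
  ∀ i j : ℕ, i < l → j < l → (s (q + i) < s (q + j) ↔ s (q + l + i) < s (q + l + j))

/-- An explicit infinite square-free sequence of integers. -/
def bf (n : ℕ) : ℤ :=
  if n % 2 = 0 then (if n % 4 = 0 then 2 * (n : ℤ) ^ 2 + 1 else -(2 * (n : ℤ) ^ 2 + 1))
  else -2 * bf (n / 2)
termination_by n
decreasing_by omega

lemma bf_zero_mod (n : ℕ) (h : n % 4 = 0) : bf n = 2 * (n : ℤ) ^ 2 + 1 := by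
  rw [bf, if_pos (by omega), if_pos h]

lemma bf_two_mod (n : ℕ) (h : n % 4 = 2) : bf n = -(2 * (n : ℤ) ^ 2 + 1) := by
  rw [bf, if_pos (by omega), if_neg (by omega)]

lemma bf_odd (i : ℕ) : bf (2 * i + 1) = -2 * bf i := by
  rw [bf, if_neg (by omega)]
  congr 2
  omega

lemma bf_abs (n : ℕ) : |bf n| ≤ 2 * (n : ℤ) ^ 2 + 1 := by
  induction n using Nat.strong_induction_on with
  | _ n ih =>
    rcases Nat.even_or_odd' n with ⟨i, rfl | rfl⟩
    · rcases (by omega : (2 * i) % 4 = 0 ∨ (2 * i) % 4 = 2) with h | h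
      · rw [bf_zero_mod _ h, abs_of_nonneg (by positivity)]
      · rw [bf_two_mod _ h, abs_neg, abs_of_nonneg (by positivity)]
    · rw [bf_odd, abs_mul]
      have := ih i (by omega)
      push_cast
      have h2 : |(-2 : ℤ)| = 2 := by norm_num
      rw [h2]
      nlinarith [this, (Int.natCast_nonneg i)]

lemma bf_odd_lt (i n : ℕ) (hn : n = 2 * i ∨ n = 2 * i + 2) (h0 : n ≠ 0) :
    |bf (2 * i + 1)| < 2 * (n : ℤ) ^ 2 + 1 := by
  rw [bf_odd, abs_mul]
  have := bf_abs i
  have h2 : |(-2 : ℤ)| = 2 := by norm_num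
  rw [h2]
  rcases hn with rfl | rfl
  · have : (1 : ℤ) ≤ i := by omega
    push_cast
    nlinarith
  · have : (0 : ℤ) ≤ i := by omega
    push_cast
    nlinarith

lemma bf_zero : bf 0 = 1 := by rw [bf_zero_mod 0 rfl]; norm_num
lemma bf_one : bf 1 = -2 := by
  have := bf_odd 0
  rw [bf_zero] at this
  simpa using this

lemma bf_up (j : ℕ) (h : j % 4 = 2 ∨ j % 4 = 3) : bf j < bf (j + 1) := by
  rcases h with h | h
  · obtain ⟨i, rfl⟩ : ∃ i, j = 2 * i := ⟨j / 2, by omega⟩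
    have := bf_odd_lt i (2 * i) (Or.inl rfl) (by omega)
    rw [bf_two_mod _ h]
    exact (abs_lt.mp this).1
  · obtain ⟨i, rfl⟩ : ∃ i, j = 2 * i + 1 := ⟨j / 2, by omega⟩
    have := bf_odd_lt i (2 * i + 2) (Or.inr rfl) (by omega)
    rw [show 2 * i + 1 + 1 = 2 * i + 2 from rfl, bf_zero_mod (2 * i + 2) (by omega)]
    exact (abs_lt.mp this).2

lemma bf_down (j : ℕ) (h : j % 4 = 0 ∨ j % 4 = 1) : bf (j + 1) < bf j := by
  rcases h with h | h
  · obtain ⟨i, rfl⟩ : ∃ i, j = 2 * i := ⟨j / 2, by omega⟩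
    by_cases hi : i = 0
    · subst hi
      simp only [Nat.mul_zero, Nat.zero_add, bf_zero, bf_one]
      norm_num
    have := bf_odd_lt i (2 * i) (Or.inl rfl) (by omega)
    rw [bf_zero_mod _ h]
    exact (abs_lt.mp this).2
  · obtain ⟨i, rfl⟩ : ∃ i, j = 2 * i + 1 := ⟨j / 2, by omega⟩
    have := bf_odd_lt i (2 * i + 2) (Or.inr rfl) (by omega)
    rw [show 2 * i + 1 + 1 = 2 * i + 2 from rfl, bf_two_mod (2 * i + 2) (by omega)]
    exact (abs_lt.mp this).1

lemma bf_adj (j : ℕ) : bf j < bf (j + 1) ↔ (j % 4 = 2 ∨ j % 4 = 3) := by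
  constructor
  · intro h
    by_contra h2
    exact absurd (bf_down j (by omega)) (not_lt.mpr h.le)
  · exact bf_up j

lemma bf_inj : ∀ a b : ℕ, bf a = bf b → a = b := by
  intro a
  induction a using Nat.strong_induction_on with
  | _ a ih =>
    intro b hab
    have key : ∀ n : ℕ, n % 2 = 0 → (bf n) % 2 = 1 ∧ |bf n| = 2 * (n : ℤ) ^ 2 + 1 := by
      intro n hn
      rcases (by omega : n % 4 = 0 ∨ n % 4 = 2) with h | h
      · rw [bf_zero_mod _ h, abs_of_nonneg (by positivity)]
        exact ⟨by omega, rfl⟩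
      · rw [bf_two_mod _ h, abs_neg, abs_of_nonneg (by positivity)]
        exact ⟨by omega, rfl⟩
    rcases Nat.even_or_odd' a with ⟨i, rfl | rfl⟩ <;> rcases Nat.even_or_odd' b with ⟨j, rfl | rfl⟩
    · have h1 := (key (2 * i) (by omega)).2
      have h2 := (key (2 * j) (by omega)).2
      rw [hab, h2] at h1
      have h3 : ((2 * j : ℕ) : ℤ) ^ 2 = ((2 * i : ℕ) : ℤ) ^ 2 := by linarith
      have h4 : (2 * j) ^ 2 = (2 * i) ^ 2 := by exact_mod_cast h3
      exact (Nat.pow_left_injective (by norm_num : 2 ≠ 0) h4).symm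
    · have h1 := (key (2 * i) (by omega)).1
      rw [hab, bf_odd] at h1
      omega
    · have h1 := (key (2 * j) (by omega)).1
      rw [← hab, bf_odd] at h1
      omega
    · rw [bf_odd, bf_odd] at hab
      have := ih i (by omega) j (by omega)
      omega

lemma bf_sqfree : ∀ l q : ℕ, 2 ≤ l → ¬ Sq bf q l := by
  intro l
  induction l using Nat.strong_induction_on with
  | _ l ih =>
    intro q hl hS
    have h0 := hS 0 1 (by omega) (by omega)
    rw [Nat.add_zero, Nat.add_zero, bf_adj, bf_adj] at h0
    have hl4 : l % 4 = 0 := by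
      by_cases h2 : l = 2
      · omega
      · have h1 := hS 1 2 (by omega) (by omega)
        rw [show q + 2 = (q + 1) + 1 from rfl, show q + l + 2 = (q + l + 1) + 1 from rfl,
          bf_adj, bf_adj] at h1
        omega
    refine ih (l / 2) (by omega) (q / 2) (by omega) ?_
    intro i j hi hj
    have h := hS (1 - q % 2 + 2 * j) (1 - q % 2 + 2 * i) (by omega) (by omega)
    rw [show q + (1 - q % 2 + 2 * j) = 2 * (q / 2 + j) + 1 by omega,
      show q + (1 - q % 2 + 2 * i) = 2 * (q / 2 + i) + 1 by omega,
      show q + l + (1 - q % 2 + 2 * j) = 2 * (q / 2 + l / 2 + j) + 1 by omega,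
      show q + l + (1 - q % 2 + 2 * i) = 2 * (q / 2 + l / 2 + i) + 1 by omega,
      bf_odd, bf_odd, bf_odd, bf_odd] at h
    constructor
    · intro h'; have := h.mp (by omega); omega
    · intro h'; have := h.mpr (by omega); omega

/-- The sequence `bf` up to sign, normalised so that entry `2k-2` is the least of the first `2k`. -/
lemma exists_w (k : ℕ) (hk : 2 ≤ k) : ∃ w : ℕ → ℤ,
    (∀ a b, w a = w b → a = b) ∧ (∀ l q, 2 ≤ l → ¬ Sq w q l) ∧
    (∀ j, w j < w (j + 1) ↔ ((j + 2 * k) % 4 = 2 ∨ (j + 2 * k) % 4 = 3)) ∧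
    (∀ j, j < 2 * k → j ≠ 2 * k - 2 → w (2 * k - 2) < w j) := by
  have hb : ∀ j, j < 2 * k → j ≠ 2 * k - 2 → |bf j| < 2 * ((2 * k - 2 : ℕ) : ℤ) ^ 2 + 1 := by
    intro j hj hne
    rcases Nat.even_or_odd' j with ⟨i, rfl | rfl⟩
    · have h1 := bf_abs (2 * i)
      have h2 : ((2 * i : ℕ) : ℤ) < ((2 * k - 2 : ℕ) : ℤ) := by omega
      have h3 : (0 : ℤ) ≤ ((2 * i : ℕ) : ℤ) := by omega
      nlinarith
    · rw [bf_odd, abs_mul, show |(-2 : ℤ)| = 2 by norm_num]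
      have h1 := bf_abs i
      have h2 : 2 * (i : ℤ) ≤ ((2 * k - 2 : ℕ) : ℤ) := by omega
      have h3 : (0 : ℤ) ≤ (i : ℤ) := by omega
      have h4 : (2 : ℤ) ≤ ((2 * k - 2 : ℕ) : ℤ) := by omega
      nlinarith
  rcases Nat.even_or_odd' k with ⟨r, hr | hr⟩
  · refine ⟨bf, bf_inj, bf_sqfree, ?_, ?_⟩
    · intro j
      rw [bf_adj]; omega
    · intro j h1 h2
      have := hb j h1 h2
      rw [bf_two_mod (2 * k - 2) (by omega)]
      exact (abs_lt.mp this).1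
  · refine ⟨fun j => - bf j, ?_, ?_, ?_, ?_⟩
    · intro a b hab
      exact bf_inj a b (neg_injective hab)
    · intro l q hl hS
      refine bf_sqfree l q hl ?_
      intro i j hi hj
      have := hS j i hj hi
      simpa only [neg_lt_neg_iff] using this
    · intro j
      have h1 := bf_adj j
      have h2 := bf_inj j (j + 1)
      simp only [neg_lt_neg_iff]
      constructor
      · intro h
        have : ¬ bf j < bf (j + 1) := not_lt.mpr h.le
        rw [h1] at this
        omega
      · intro h
        have : ¬ bf j < bf (j + 1) := by rw [h1]; omega
        exact bf_down j (by omega)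
    · intro j h1 h2
      have := hb j h1 h2
      simp only [neg_lt_neg_iff]
      rw [bf_zero_mod (2 * k - 2) (by omega)]
      exact (abs_lt.mp this).2

/-- The values realising the bicrucial permutation of length `8k+3`. -/
def gv (k : ℕ) (w : ℕ → ℤ) (M : ℤ) (p : ℕ) : ℤ :=
  if p % 4 = 1 then M + p
  else if p % 4 = 3 then (if p = 8 * k - 9 then -(M + 1) else -(M + 4))
  else if p = 0 then -(M + 6)
  else if p = 8 * k + 2 then -(M + 5)
  else if p % 8 = 4 then (if p = 8 * k - 4 then -(M + 3) else -M)
  else if p % 8 = 0 then M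
  else if p = 8 * k - 6 then -(M + 2)
  else w (p / 4)

/-- What is used of the values. -/
structure GoodV (k : ℕ) (w G : ℕ → ℤ) (M : ℤ) : Prop where
  pos : 0 < M
  top : ∀ p, p % 4 = 1 → G p = M + p
  bot : ∀ p, p % 4 = 3 → p ≠ 8 * k - 9 → G p = -(M + 4)
  bot' : G (8 * k - 9) = -(M + 1)
  first : G 0 = -(M + 6)
  last : G (8 * k + 2) = -(M + 5)
  low : ∀ p, p % 8 = 4 → p ≠ 8 * k - 4 → G p = -M
  low' : G (8 * k - 4) = -(M + 3)
  high : ∀ p, p % 8 = 0 → p ≠ 0 → G p = M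
  mid' : G (8 * k - 6) = -(M + 2)
  mid : ∀ p, p % 4 = 2 → p ≠ 8 * k - 6 → p < 8 * k → G p = w (p / 4) ∧ -M < G p ∧ G p < M

lemma exists_good (k : ℕ) (hk : 2 ≤ k) (w : ℕ → ℤ) : ∃ G M, GoodV k w G M := by
  obtain ⟨M, hM0, hM⟩ : ∃ M : ℤ, 0 < M ∧ ∀ j < 2 * k, |w j| < M := by
    refine ⟨∑ j ∈ Finset.range (2 * k), |w j| + 1, ?_, ?_⟩
    · have : 0 ≤ ∑ j ∈ Finset.range (2 * k), |w j| := Finset.sum_nonneg (fun _ _ => abs_nonneg _)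
      omega
    · intro j hj
      have := Finset.single_le_sum (f := fun j => |w j|) (fun i _ => abs_nonneg (w i))
        (Finset.mem_range.mpr hj)
      have h2 : |w j| ≤ ∑ j ∈ Finset.range (2 * k), |w j| := this
      omega
  refine ⟨gv k w M, M, hM0, ?_, ?_, ?_, ?_, ?_, ?_, ?_, ?_, ?_, ?_⟩
  · intro p h; simp [gv, h]
  · intro p h h'; simp only [gv]; split_ifs <;> first | contradiction | omega | rfl
  · simp only [gv]; split_ifs <;> first | contradiction | omega | rfl
  · simp only [gv]; split_ifs <;> first | contradiction | omega | rfl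
  · simp only [gv]; split_ifs <;> first | contradiction | omega | rfl
  · intro p h h'; simp only [gv]; split_ifs <;> first | contradiction | omega | rfl
  · simp only [gv]; split_ifs <;> first | contradiction | omega | rfl
  · intro p h h'; simp only [gv]; split_ifs <;> first | contradiction | omega | rfl
  · simp only [gv]; split_ifs <;> first | contradiction | omega | rfl
  · intro p h h' h''
    have e : gv k w M p = w (p / 4) := by
      simp only [gv]; split_ifs <;> first | contradiction | omega | rfl
    have := abs_lt.mp (hM (p / 4) (by omega))
    exact ⟨e, by rw [e]; exact this.1, by rw [e]; exact this.2⟩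

lemma mid_bounds {k : ℕ} {w G : ℕ → ℤ} {M : ℤ} (hG : GoodV k w G M) (p : ℕ) (h : p % 4 = 2)
    (hp : p ≤ 8 * k + 2) : -(M + 5) ≤ G p ∧ G p < M ∧ (p < 8 * k → -(M + 2) ≤ G p) ∧
      (p < 8 * k → p ≠ 8 * k - 6 → -M < G p) := by
  have := hG.pos
  by_cases h1 : p = 8 * k + 2
  · subst h1; rw [hG.last]; omega
  by_cases h2 : p = 8 * k - 6
  · subst h2; rw [hG.mid']; omega
  have := hG.mid p h h2 (by omega)
  omega

lemma g_bounds {k : ℕ} {w G : ℕ → ℤ} {M : ℤ} (hG : GoodV k w G M) (p : ℕ) (h : p % 2 = 0)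
    (hp : p ≤ 8 * k + 2) : G p ≤ M ∧ (p ≠ 0 → p ≠ 8 * k + 2 → -(M + 3) ≤ G p) ∧
    (p ≠ 0 → p ≠ 8 * k + 2 → p ≠ 8 * k - 4 → p ≠ 8 * k - 6 → -M ≤ G p) := by
  have := hG.pos
  rcases (by omega : p % 4 = 2 ∨ p % 8 = 0 ∨ p % 8 = 4) with h1 | h1 | h1
  · have := mid_bounds hG p h1 hp
    omega
  · by_cases h0 : p = 0
    · subst h0; rw [hG.first]; omega
    · rw [hG.high p h1 h0]; omega
  · by_cases h0 : p = 8 * k - 4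
    · subst h0; rw [hG.low']; omega
    · rw [hG.low p h1 h0]; omega

/-- steps of the whole sequence -/
lemma g_adj {k : ℕ} (hk : 2 ≤ k) {w G : ℕ → ℤ} {M : ℤ} (hG : GoodV k w G M) (p : ℕ)
    (hp : p < 8 * k + 2) :
    ((p % 4 = 0 ∨ p % 4 = 3) → G p < G (p + 1)) ∧ ((p % 4 = 1 ∨ p % 4 = 2) → G (p + 1) < G p) := by
  have hM := hG.pos
  rcases (by omega : p % 4 = 0 ∨ p % 4 = 1 ∨ p % 4 = 2 ∨ p % 4 = 3) with h | h | h | h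
  · have h1 := g_bounds hG p (by omega) (by omega)
    have h2 := hG.top (p + 1) (by omega)
    omega
  · have h1 := g_bounds hG (p + 1) (by omega) (by omega)
    have h2 := hG.top p (by omega)
    omega
  · have h1 := g_bounds hG p (by omega) (by omega)
    by_cases h0 : p + 1 = 8 * k - 9
    · have := hG.bot'
      rw [h0]; omega
    · have := hG.bot (p + 1) (by omega) h0
      omega
  · have h1 := g_bounds hG (p + 1) (by omega) (by omega)
    by_cases h0 : p = 8 * k - 9
    · have := hG.bot'
      rw [← h0] at this
      omega
    · have := hG.bot p (by omega) h0
      omega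

/-- steps of the subsequence at even positions -/
lemma m_adj {k : ℕ} (hk : 2 ≤ k) {w G : ℕ → ℤ} {M : ℤ} (hG : GoodV k w G M) (p : ℕ)
    (h2 : p % 2 = 0) (hp : p < 8 * k + 2) :
    ((p = 0 ∨ p % 8 = 4 ∨ p % 8 = 6) → G p < G (p + 2)) ∧
    (p ≠ 0 → (p % 8 = 0 ∨ p % 8 = 2) → G (p + 2) < G p) := by
  have hM := hG.pos
  rcases (by omega : p % 8 = 0 ∨ p % 8 = 2 ∨ p % 8 = 4 ∨ p % 8 = 6) with h | h | h | h
  · have h1 := mid_bounds hG (p + 2) (by omega) (by omega)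
    by_cases h0 : p = 0
    · subst h0
      have := hG.first
      simp only [Nat.zero_add] at *
      omega
    · have := hG.high p h h0
      omega
  · have h1 := mid_bounds hG p (by omega) (by omega)
    by_cases h0 : p + 2 = 8 * k - 4
    · have := hG.low'
      rw [h0]
      omega
    · have := hG.low (p + 2) (by omega) h0
      omega
  · have h1 := mid_bounds hG (p + 2) (by omega) (by omega)
    by_cases h0 : p = 8 * k - 4
    · have := hG.low'
      rw [← h0] at this
      omega
    · have := hG.low p (by omega) h0
      omega
  · have h1 := mid_bounds hG p (by omega) (by omega)
    have := hG.high (p + 2) (by omega) (by omega)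
    omega

/-- A sequence whose order refines that of the values has no square. -/
lemma s_sqfree {k : ℕ} (hk : 2 ≤ k) {w G : ℕ → ℤ} {M : ℤ} (hG : GoodV k w G M)
    (winj : ∀ a b, w a = w b → a = b) (wsf : ∀ l q, 2 ≤ l → ¬ Sq w q l)
    (wadj : ∀ j, w j < w (j + 1) ↔ ((j + 2 * k) % 4 = 2 ∨ (j + 2 * k) % 4 = 3))
    (wmin : ∀ j, j < 2 * k → j ≠ 2 * k - 2 → w (2 * k - 2) < w j)
    (s : ℕ → ℕ) (hs : ∀ p q, p < 8 * k + 3 → q < 8 * k + 3 → G p < G q → s p < s q)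
    (q l : ℕ) (hl : 2 ≤ l) (hq : q + 2 * l ≤ 8 * k + 3) : ¬ Sq s q l := by
  intro hS
  have hM := hG.pos
  -- steps of `s`
  have sadj : ∀ p, p < 8 * k + 2 → (s p < s (p + 1) ↔ (p % 4 = 0 ∨ p % 4 = 3)) := by
    intro p hp
    have h := g_adj hk hG p hp
    constructor
    · intro h1
      by_contra h2
      have := hs (p + 1) p (by omega) (by omega) (h.2 (by omega))
      omega
    · intro h1
      exact hs p (p + 1) (by omega) (by omega) (h.1 h1)
  have madj : ∀ p, p % 2 = 0 → p < 8 * k + 2 →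
      (s p < s (p + 2) ↔ (p = 0 ∨ p % 8 = 4 ∨ p % 8 = 6)) := by
    intro p h2 hp
    have h := m_adj hk hG p h2 hp
    constructor
    · intro h1
      by_contra h2
      have := hs (p + 2) p (by omega) (by omega) (h.2 (by omega) (by omega))
      omega
    · intro h1
      exact hs p (p + 2) (by omega) (by omega) (h.1 h1)
  have hl4 : l % 4 = 0 := by
    have h0 := hS 0 1 (by omega) (by omega)
    rw [Nat.add_zero, Nat.add_zero, sadj _ (by omega), sadj _ (by omega)] at h0
    by_cases h2 : l = 2
    · omega
    · have h1 := hS 1 2 (by omega) (by omega)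
      rw [show q + 2 = (q + 1) + 1 from rfl, show q + l + 2 = (q + l + 1) + 1 from rfl,
        sadj _ (by omega), sadj _ (by omega)] at h1
      omega
  -- the square at `q = 0`, `l = 4`
  have hex1 : ¬ (q = 0 ∧ l = 4) := by
    rintro ⟨rfl, rfl⟩
    have h := hS 0 3 (by omega) (by omega)
    have h1 : s 0 < s 3 := by
      apply hs 0 3 (by omega) (by omega)
      rw [hG.first, hG.bot 3 (by omega) (by omega)]
      omega
    have h2 : s 7 < s 4 := by
      apply hs 7 4 (by omega) (by omega)
      rw [hG.low 4 (by omega) (by omega)]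
      by_cases h0 : 7 = 8 * k - 9
      · rw [h0, hG.bot']; omega
      · rw [hG.bot 7 (by omega) h0]; omega
    have h3 : s 4 < s 7 := h.mp h1
    omega
  have hl8 : l % 8 = 0 ∧ q ≠ 0 := by
    have h0 := hS (q % 2) (q % 2 + 2) (by omega) (by omega)
    rw [show q + (q % 2 + 2) = (q + q % 2) + 2 by omega,
      show q + l + (q % 2 + 2) = (q + l + q % 2) + 2 by omega,
      madj _ (by omega) (by omega), madj _ (by omega) (by omega)] at h0
    by_cases h4 : l = 4
    · omega
    · have h1 := hS (q % 2 + 2) (q % 2 + 4) (by omega) (by omega)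
      rw [show q + (q % 2 + 4) = (q + (q % 2 + 2)) + 2 by omega,
        show q + l + (q % 2 + 4) = (q + l + (q % 2 + 2)) + 2 by omega,
        madj _ (by omega) (by omega), madj _ (by omega) (by omega)] at h1
      omega
  obtain ⟨hl8, hq0⟩ := hl8
  -- order of `s` at positions `4j+2`
  have wiff' : ∀ a b, a < 2 * k → b < 2 * k → w a < w b → s (4 * a + 2) < s (4 * b + 2) := by
    intro a b ha hb hab
    apply hs _ _ (by omega) (by omega)
    have hbne : b ≠ 2 * k - 2 := by
      rintro rfl
      by_cases h : a = 2 * k - 2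
      · subst h; omega
      · have := wmin a ha h; omega
    have h1 := hG.mid (4 * b + 2) (by omega) (by omega) (by omega)
    rw [show (4 * b + 2) / 4 = b by omega] at h1
    by_cases h : a = 2 * k - 2
    · subst h
      rw [show 4 * (2 * k - 2) + 2 = 8 * k - 6 by omega, hG.mid']
      omega
    · have h2 := hG.mid (4 * a + 2) (by omega) (by omega) (by omega)
      rw [show (4 * a + 2) / 4 = a by omega] at h2
      omega
  have wiff : ∀ a b, a < 2 * k → b < 2 * k → (s (4 * a + 2) < s (4 * b + 2) ↔ w a < w b) := by
    intro a b ha hb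
    constructor
    · intro h
      rcases lt_trichotomy (w a) (w b) with h1 | h1 | h1
      · exact h1
      · have := winj _ _ h1
        subst this; omega
      · have := wiff' b a hb ha h1; omega
    · exact wiff' a b ha hb
  -- the square of the subsequence at positions `4j+2`
  obtain ⟨j, r, hr, hj⟩ : ∃ j r, r < 4 ∧ q + r = 4 * j + 2 := ⟨(q + 1) / 4, 4 * ((q + 1) / 4) + 2 - q,
    by omega, by omega⟩
  obtain ⟨g, hg⟩ : ∃ g, l = 4 * g := ⟨l / 4, by omega⟩
  have hS' : ∀ a b, a < g → b < g → (s (4 * (j + a) + 2) < s (4 * (j + b) + 2) ↔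
      s (4 * (j + g + a) + 2) < s (4 * (j + g + b) + 2)) := by
    intro a b ha hb
    have h := hS (r + 4 * a) (r + 4 * b) (by omega) (by omega)
    rw [show q + (r + 4 * a) = 4 * (j + a) + 2 by omega,
      show q + (r + 4 * b) = 4 * (j + b) + 2 by omega,
      show q + l + (r + 4 * a) = 4 * (j + g + a) + 2 by omega,
      show q + l + (r + 4 * b) = 4 * (j + g + b) + 2 by omega] at h
    exact h
  by_cases hend : j + 2 * g ≤ 2 * k
  · refine wsf g j (by omega) ?_
    intro a b ha hb
    have h := hS' a b ha hb
    rw [wiff _ _ (by omega) (by omega), wiff _ _ (by omega) (by omega)] at h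
    exact h
  · have hend' : j + 2 * g = 2 * k + 1 := by omega
    have h1 := hS' (g - 2) (g - 1) (by omega) (by omega)
    have hlast : s (4 * (j + g + (g - 1)) + 2) < s (4 * (j + g + (g - 2)) + 2) := by
      apply hs _ _ (by omega) (by omega)
      rw [show 4 * (j + g + (g - 1)) + 2 = 8 * k + 2 by omega,
        show 4 * (j + g + (g - 2)) + 2 = 8 * k - 2 by omega, hG.last]
      have := hG.mid (8 * k - 2) (by omega) (by omega) (by omega)
      omega
    rw [wiff _ _ (by omega) (by omega), show j + (g - 1) = j + (g - 2) + 1 by omega, wadj] at h1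
    by_cases hg2 : g = 2
    · -- the exceptional square of half-length 8
      have hqq : q = 8 * k - 13 := by omega
      have hl' : l = 8 := by omega
      subst hl' hqq
      have h := hS 0 7 (by omega) (by omega)
      have e1 : s (8 * k - 13 + 0) < s (8 * k - 13 + 7) := by
        apply hs _ _ (by omega) (by omega)
        rw [hG.bot (8 * k - 13 + 0) (by omega) (by omega),
          show 8 * k - 13 + 7 = 8 * k - 6 by omega, hG.mid']
        omega
      have e2 : s (8 * k - 13 + 8 + 7) < s (8 * k - 13 + 8 + 0) := by
        apply hs _ _ (by omega) (by omega)
        rw [hG.bot (8 * k - 13 + 8 + 0) (by omega) (by omega),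
          show 8 * k - 13 + 8 + 7 = 8 * k + 2 by omega, hG.last]
        omega
      have := h.mp e1
      omega
    · have h2 := hS' (g - 3) (g - 2) (by omega) (by omega)
      rw [wiff _ _ (by omega) (by omega), wiff _ _ (by omega) (by omega),
        show j + (g - 2) = j + (g - 3) + 1 by omega,
        show j + g + (g - 2) = j + g + (g - 3) + 1 by omega, wadj, wadj] at h2
      omega

lemma sq_two {s : ℕ → ℕ} {q : ℕ} (h : s (q + 0) < s (q + 1)) (h' : s (q + 2 + 0) < s (q + 2 + 1)) :
    Sq s q 2 := by
  intro i j hi hj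
  interval_cases i <;> interval_cases j <;> omega

lemma sq_two' {s : ℕ → ℕ} {q : ℕ} (h : s (q + 1) < s (q + 0)) (h' : s (q + 2 + 1) < s (q + 2 + 0)) :
    Sq s q 2 := by
  intro i j hi hj
  interval_cases i <;> interval_cases j <;> omega

lemma sq_four {s : ℕ → ℕ} {q : ℕ}
    (h1 : s (q + 0) < s (q + 1)) (h2 : s (q + 1) < s (q + 3)) (h3 : s (q + 3) < s (q + 2))
    (h1' : s (q + 4 + 0) < s (q + 4 + 1)) (h2' : s (q + 4 + 1) < s (q + 4 + 3))
    (h3' : s (q + 4 + 3) < s (q + 4 + 2)) : Sq s q 4 := by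
  intro i j hi hj
  interval_cases i <;> interval_cases j <;> omega

lemma sq_eight {s : ℕ → ℕ} {q : ℕ}
    (h1 : s (q + 7) < s (q + 6)) (h2 : s (q + 6) < s (q + 3)) (h3 : s (q + 3) < s (q + 0))
    (h4 : s (q + 0) < s (q + 2)) (h5 : s (q + 2) < s (q + 4)) (h6 : s (q + 4) < s (q + 1))
    (h7 : s (q + 1) < s (q + 5))
    (h1' : s (q + 8 + 7) < s (q + 8 + 6)) (h2' : s (q + 8 + 6) < s (q + 8 + 3))
    (h3' : s (q + 8 + 3) < s (q + 8 + 0)) (h4' : s (q + 8 + 0) < s (q + 8 + 2))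
    (h5' : s (q + 8 + 2) < s (q + 8 + 4)) (h6' : s (q + 8 + 4) < s (q + 8 + 1))
    (h7' : s (q + 8 + 1) < s (q + 8 + 5)) : Sq s q 8 := by
  intro i j hi hj
  interval_cases i <;> interval_cases j <;> omega

/-- The numerical values of a self-map of `Fin n`, extended by zero. -/
def ev {n : ℕ} (f : Fin n → Fin n) (p : ℕ) : ℕ := if h : p < n then (f ⟨p, h⟩ : ℕ) else 0

lemma ev_eq {n : ℕ} (f : Fin n → Fin n) (p : ℕ) (h : p < n) : ev f p = (f ⟨p, h⟩ : ℕ) := dif_pos h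

lemma hasSquareAt_iff {n : ℕ} (f : Fin n → Fin n) (q l : ℕ) :
    HasSquareAt f q l ↔ 2 ≤ l ∧ q + 2 * l ≤ n ∧ Sq (ev f) q l := by
  constructor
  · rintro ⟨h2, hb, h⟩
    refine ⟨h2, hb, ?_⟩
    intro i j hi hj
    rw [ev_eq f (q + i) (by omega), ev_eq f (q + j) (by omega), ev_eq f (q + l + i) (by omega),
      ev_eq f (q + l + j) (by omega)]
    exact h i j hi hj
  · rintro ⟨h2, hb, h⟩
    refine ⟨h2, hb, ?_⟩
    intro i j hi hj
    have := h i j hi hj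
    rw [ev_eq f (q + i) (by omega), ev_eq f (q + j) (by omega), ev_eq f (q + l + i) (by omega),
      ev_eq f (q + l + j) (by omega)] at this
    exact this

lemma exists_perm (n : ℕ) (G : ℕ → ℤ) : ∃ σ : Equiv.Perm (Fin n),
    ∀ p q (hp : p < n) (hq : q < n), G p < G q → σ ⟨p, hp⟩ < σ ⟨q, hq⟩ := by
  let g : Fin n → ℤ := fun i => G i
  refine ⟨(Tuple.sort g).symm, ?_⟩
  intro p q hp hq h
  by_contra hc
  have hm := Tuple.monotone_sort g (not_lt.mp hc)
  simp only [Function.comp, Equiv.apply_symm_apply] at hm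
  exact absurd h (not_lt.mpr hm)

set_option maxHeartbeats 2000000 in
/-- Appending any value on the right creates a square. -/
lemma right_square {k : ℕ} (hk : 2 ≤ k) {w G : ℕ → ℤ} {M : ℤ} (hG : GoodV k w G M)
    (s : ℕ → ℕ) (hs : ∀ p q, p < 8 * k + 3 → q < 8 * k + 3 → G p < G q → s p < s q)
    (hne : s (8 * k + 2) ≠ s (8 * k + 3)) :
    ∃ q l, 2 ≤ l ∧ q + 2 * l ≤ 8 * k + 3 + 1 ∧ Sq s q l := by
  have hM := hG.pos
  rcases lt_or_gt_of_ne hne with h | h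
  · refine ⟨8 * k, 2, le_refl _, by omega, sq_two ?_ h⟩
    exact hs _ _ (by omega) (by omega) ((g_adj hk hG (8 * k) (by omega)).1 (by omega))
  · refine ⟨8 * k - 12, 8, by omega, by omega, ?_⟩
    have a0 := hG.low (8 * k - 12 + 0) (by omega) (by omega)
    have a1 := hG.top (8 * k - 12 + 1) (by omega)
    have a2 := hG.mid (8 * k - 12 + 2) (by omega) (by omega) (by omega)
    have a3 := hG.bot'
    rw [show 8 * k - 9 = 8 * k - 12 + 3 by omega] at a3
    have a4 := hG.high (8 * k - 12 + 4) (by omega) (by omega)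
    have a5 := hG.top (8 * k - 12 + 5) (by omega)
    have a6 := hG.mid'
    rw [show 8 * k - 6 = 8 * k - 12 + 6 by omega] at a6
    have a7 := hG.bot (8 * k - 12 + 7) (by omega) (by omega)
    have b0 := hG.low'
    rw [show 8 * k - 4 = 8 * k - 12 + 8 + 0 by omega] at b0
    have b1 := hG.top (8 * k - 12 + 8 + 1) (by omega)
    have b2 := hG.mid (8 * k - 12 + 8 + 2) (by omega) (by omega) (by omega)
    have b3 := hG.bot (8 * k - 12 + 8 + 3) (by omega) (by omega)
    have b4 := hG.high (8 * k - 12 + 8 + 4) (by omega) (by omega)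
    have b5 := hG.top (8 * k - 12 + 8 + 5) (by omega)
    have b6 := hG.last
    rw [show 8 * k + 2 = 8 * k - 12 + 8 + 6 by omega] at b6 h
    rw [show 8 * k + 3 = 8 * k - 12 + 8 + 7 by omega] at h
    replace a2 := a2.2
    replace b2 := b2.2
    clear hne
    obtain ⟨Q, hQ⟩ : ∃ Q, Q = 8 * k - 12 := ⟨_, rfl⟩
    have hQ' : Q + 15 = 8 * k + 3 := by omega
    rw [← hQ] at a0 a1 a2 a3 a4 a5 a6 a7 b0 b1 b2 b3 b4 b5 b6 h ⊢
    rw [← hQ'] at hs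
    clear hQ hQ' hG hk
    refine sq_eight ?_ ?_ ?_ ?_ ?_ ?_ ?_ h ?_ ?_ ?_ ?_ ?_ ?_ <;>
      exact hs _ _ (by omega) (by omega) (by omega)

/-- Prepending any value on the left creates a square. -/
lemma left_square {k : ℕ} (hk : 2 ≤ k) {w G : ℕ → ℤ} {M : ℤ} (hG : GoodV k w G M)
    (s : ℕ → ℕ) (hs : ∀ p q, p < 8 * k + 3 → q < 8 * k + 3 → G p < G q → s (p + 1) < s (q + 1))
    (hne : s 0 ≠ s 1) :
    ∃ q l, 2 ≤ l ∧ q + 2 * l ≤ 8 * k + 3 + 1 ∧ Sq s q l := by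
  have hM := hG.pos
  rcases lt_or_gt_of_ne hne with h | h
  · refine ⟨0, 4, by omega, by omega, ?_⟩
    have a0 := hG.first
    have a1 := hG.top 1 (by omega)
    have a2 := hG.mid 2 (by omega) (by omega) (by omega)
    have a3 := hG.bot 3 (by omega) (by omega)
    have a4 := hG.low 4 (by omega) (by omega)
    have a5 := hG.top 5 (by omega)
    have a6 := hG.mid 6 (by omega) (by omega) (by omega)
    exact sq_four h (hs 0 2 (by omega) (by omega) (by omega))
      (hs 2 1 (by omega) (by omega) (by omega)) (hs 3 4 (by omega) (by omega) (by omega))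
      (hs 4 6 (by omega) (by omega) (by omega)) (hs 6 5 (by omega) (by omega) (by omega))
  · refine ⟨0, 2, le_refl _, by omega, sq_two' h ?_⟩
    exact hs 2 1 (by omega) (by omega) ((g_adj hk hG 1 (by omega)).2 (by omega))

theorem bicrucial_aux (k : ℕ) (hk : 2 ≤ k) :
    ∃ σ : Equiv.Perm (Fin (8 * k + 3)), Bicrucial σ := by
  obtain ⟨w, winj, wsf, wadj, wmin⟩ := exists_w k hk
  obtain ⟨G, M, hG⟩ := exists_good k hk w
  obtain ⟨σ, hσ⟩ := exists_perm (8 * k + 3) G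
  have hsf : SquareFree ⇑σ := by
    rintro ⟨q, l, h⟩
    rw [hasSquareAt_iff] at h
    obtain ⟨h1, h2, h3⟩ := h
    refine s_sqfree hk hG winj wsf wadj wmin (ev σ) ?_ q l h1 h2 h3
    intro p r hp hr h
    rw [ev_eq _ p hp, ev_eq _ r hr]
    exact hσ p r hp hr h
  refine ⟨σ, ⟨hsf, ?_⟩, ⟨hsf, ?_⟩⟩
  · intro π hπ
    obtain ⟨q, l, h1, h2, h3⟩ := left_square hk hG (ev π) (by
      intro p r hp hr h
      rw [ev_eq _ (p + 1) (by omega), ev_eq _ (r + 1) (by omega)]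
      exact (hπ ⟨p, hp⟩ ⟨r, hr⟩).mpr (hσ p r hp hr h)) (by
      rw [ev_eq _ 0 (by omega), ev_eq _ 1 (by omega)]
      intro h
      have := π.injective (Fin.ext h)
      simp at this)
    exact ⟨q, l, (hasSquareAt_iff _ _ _).mpr ⟨h1, h2, h3⟩⟩
  · intro π hπ
    obtain ⟨q, l, h1, h2, h3⟩ := right_square hk hG (ev π) (by
      intro p r hp hr h
      rw [ev_eq _ p (by omega), ev_eq _ r (by omega)]
      exact (hπ ⟨p, hp⟩ ⟨r, hr⟩).mpr (hσ p r hp hr h)) (by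
      rw [ev_eq _ (8 * k + 2) (by omega), ev_eq _ (8 * k + 3) (by omega)]
      intro h
      have := π.injective (Fin.ext h)
      simp at this)
    exact ⟨q, l, (hasSquareAt_iff _ _ _).mpr ⟨h1, h2, h3⟩⟩

/-- For every integer `k ≥ 2`, there exists a bicrucial permutation of length `8k + 3`. -/
theorem bicrucial_exists_8k_add_3' (k : ℕ) (hk : 2 ≤ k) :
    ∃ σ : Equiv.Perm (Fin (8 * k + 3)), Bicrucial σ := by
  exact bicrucial_aux k hk
end

section
/- For every n in the set {32, 34, 36, 40, 42, 44, 46}, there exists a bicrucial permutation of length n. -/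
/-- Boolean test: the key sequence `K` has a square at `k` with half-length `l`. -/
def sqB (K : ℕ → ℕ) (k l : ℕ) : Bool :=
  (List.range l).all fun i => (List.range l).all fun j =>
    (Nat.blt (K (k + i)) (K (k + j))) == (Nat.blt (K (k + l + i)) (K (k + l + j)))

/-- Boolean test for square-freeness of the first `n` keys. -/
def freeB (K : ℕ → ℕ) (n : ℕ) : Bool :=
  (List.range (n / 2 + 1)).all fun l => Nat.blt l 2 ||
    (List.range (n + 1 - 2 * l)).all fun k => !(sqB K k l)

/-- Keys of the sequence `K` of length `n` followed by a new element in gap `g`. -/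
def rightK (K : ℕ → ℕ) (n g i : ℕ) : ℕ := bif Nat.blt i n then 2 * K i + 1 else 2 * g

/-- Keys of the sequence `K` preceded by a new element in gap `g`. -/
def leftK (K : ℕ → ℕ) (g i : ℕ) : ℕ := bif Nat.beq i 0 then 2 * g else 2 * K (i - 1) + 1

/-- Boolean test: each right-extension has a square as a suffix, half-length from `Ls`. -/
def rightB (K : ℕ → ℕ) (n : ℕ) (Ls : List ℕ) : Bool :=
  (List.range (n + 1)).all fun g => Ls.any fun l =>
    Nat.ble 2 l && (Nat.ble (2 * l) (n + 1) && sqB (rightK K n g) (n + 1 - 2 * l) l)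

/-- Boolean test: each left-extension has a square as a prefix, half-length from `Ls`. -/
def leftB (K : ℕ → ℕ) (n : ℕ) (Ls : List ℕ) : Bool :=
  (List.range (n + 1)).all fun g => Ls.any fun l =>
    Nat.ble 2 l && (Nat.ble (2 * l) (n + 1) && sqB (leftK K g) 0 l)

theorem sqB_iff (K : ℕ → ℕ) (k l : ℕ) : sqB K k l = true ↔
    ∀ i j, i < l → j < l → (K (k + i) < K (k + j) ↔ K (k + l + i) < K (k + l + j)) := by
  have hb : ∀ a b : ℕ, Nat.blt a b = decide (a < b) := by
    intro a b
    rw [Bool.eq_iff_iff]; simp [Nat.blt_eq]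
  simp only [sqB, List.all_eq_true, List.mem_range, beq_iff_eq, hb, decide_eq_decide]
  exact ⟨fun h i j hi hj => h i hi j hj, fun h i hi j hj => h i j hi hj⟩

theorem hasSquareAt_iff_s4 {n : ℕ} (f : Fin n → Fin n) (K : ℕ → ℕ)
    (h : ∀ a b : Fin n, f a < f b ↔ K a < K b) (k l : ℕ) :
    HasSquareAt f k l ↔ 2 ≤ l ∧ k + 2 * l ≤ n ∧ sqB K k l = true := by
  rw [sqB_iff]
  unfold HasSquareAt
  constructor
  · rintro ⟨h2, hb, H⟩
    refine ⟨h2, hb, fun i j hi hj => ?_⟩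
    have := H i j hi hj
    rwa [h, h] at this
  · rintro ⟨h2, hb, H⟩
    refine ⟨h2, hb, fun i j hi hj => ?_⟩
    rw [h, h]
    exact H i j hi hj

theorem exists_gap {n : ℕ} (σ : Fin n → Fin n) (π : Fin (n + 1) → Fin (n + 1))
    (e : Fin n → Fin (n + 1)) (h : ∀ i j, π (e i) < π (e j) ↔ σ i < σ j)
    (v : Fin (n + 1)) : ∃ g, g < n + 1 ∧ ∀ i, π (e i) < v ↔ (σ i : ℕ) < g := by
  classical
  have hex : ∃ g, ∀ i, π (e i) < v → (σ i : ℕ) < g := ⟨n, fun i _ => (σ i).2⟩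
  refine ⟨Nat.find hex, Nat.lt_succ_of_le (Nat.find_min' hex fun i _ => (σ i).2), fun i =>
    ⟨Nat.find_spec hex i, fun hi => ?_⟩⟩
  have hm := Nat.find_min hex (m := Nat.find hex - 1) (by omega)
  push Not at hm
  obtain ⟨j, hj, hj'⟩ := hm
  have hij : ¬ (σ j < σ i) := by
    rw [Fin.lt_def]; omega
  rw [← h] at hij
  exact lt_of_le_of_lt (not_lt.mp hij) hj

theorem bicrucial_of_check {n : ℕ} (σ : Equiv.Perm (Fin n)) (K : ℕ → ℕ)
    (hK : ∀ a : Fin n, (σ a : ℕ) = K a) (Ls Rs : List ℕ) (hf : freeB K n = true)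
    (hr : rightB K n Rs = true) (hl : leftB K n Ls = true) : Bicrucial σ := by
  have free : SquareFree ⇑σ := by
    rintro ⟨k, l, hs⟩
    rw [hasSquareAt_iff_s4 σ K (fun a b => by rw [Fin.lt_def, hK, hK])] at hs
    obtain ⟨h2, hb, hs⟩ := hs
    simp only [freeB, List.all_eq_true, List.mem_range, Bool.or_eq_true, Nat.blt_eq] at hf
    rcases hf l (by omega) with h | h
    · omega
    · have := h k (by omega)
      simp [hs] at this
  refine ⟨⟨free, fun π hπ => ?_⟩, ⟨free, fun π hπ => ?_⟩⟩
  · obtain ⟨g, hg, hgap⟩ := exists_gap σ π Fin.succ hπ (π 0)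
    simp only [leftB, List.all_eq_true, List.mem_range, List.any_eq_true, Bool.and_eq_true,
      Nat.ble_eq] at hl
    obtain ⟨l, -, h2, hb, hs⟩ := hl g hg
    refine ⟨0, l, (hasSquareAt_iff_s4 π (leftK K g) ?_ 0 l).2 ⟨h2, by omega, hs⟩⟩
    intro a b
    have k0 : leftK K g 0 = 2 * g := rfl
    have k1 : ∀ i : ℕ, leftK K g (i + 1) = 2 * K i + 1 := fun i => rfl
    have hlt := fun i j : Fin n => (hπ i j)
    refine Fin.cases ?_ (fun a => ?_) a <;> refine Fin.cases ?_ (fun b => ?_) b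
    · simp
    · have hne : π b.succ ≠ π 0 := fun h => Fin.succ_ne_zero b (π.injective h)
      have := hgap b
      rw [Fin.val_succ, Fin.val_zero, k0, k1, ← hK]
      constructor
      · intro h
        have := mt this.2 (not_lt.mpr h.le)
        omega
      · intro h
        have := mt this.1 (by omega)
        exact lt_of_le_of_ne (not_lt.mp this) hne.symm
    · rw [Fin.val_succ, Fin.val_zero, k0, k1, ← hK, hgap]
      omega
    · rw [Fin.val_succ, Fin.val_succ, k1, k1, ← hK, ← hK, hπ, Fin.lt_def]
      omega
  · obtain ⟨g, hg, hgap⟩ := exists_gap σ π Fin.castSucc hπ (π (Fin.last n))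
    simp only [rightB, List.all_eq_true, List.mem_range, List.any_eq_true, Bool.and_eq_true,
      Nat.ble_eq] at hr
    obtain ⟨l, -, h2, hb, hs⟩ := hr g hg
    refine ⟨n + 1 - 2 * l, l, (hasSquareAt_iff_s4 π (rightK K n g) ?_ _ l).2 ⟨h2, by omega, hs⟩⟩
    intro a b
    have k0 : rightK K n g n = 2 * g := by simp [rightK, cond_eq_ite]
    have k1 : ∀ i : Fin n, rightK K n g i = 2 * σ i + 1 := fun i => by
      simp [rightK, cond_eq_ite, hK]
    refine Fin.lastCases ?_ (fun a => ?_) a <;> refine Fin.lastCases ?_ (fun b => ?_) b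
    · simp
    · have hne : π b.castSucc ≠ π (Fin.last n) :=
        fun h => (Fin.castSucc_lt_last b).ne (π.injective h)
      have := hgap b
      rw [Fin.val_castSucc, Fin.val_last, k0, k1]
      constructor
      · intro h
        have := mt this.2 (not_lt.mpr h.le)
        omega
      · intro h
        have := mt this.1 (by omega)
        exact lt_of_le_of_ne (not_lt.mp this) hne.symm
    · rw [Fin.val_castSucc, Fin.val_last, k0, k1, hgap]
      omega
    · rw [Fin.val_castSucc, Fin.val_castSucc, k1, k1, hπ, Fin.lt_def]
      omega

theorem exists_of_list (n : ℕ) (L : List ℕ)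
    (hlt : ((List.range n).all fun i => Nat.blt (L.getD i 0) n) = true)
    (hinj : ((List.range n).all fun i => (List.range i).all fun j =>
      !(L.getD i 0 == L.getD j 0)) = true)
    (hf : freeB (fun i => L.getD i 0) n = true)
    (hr : rightB (fun i => L.getD i 0) n [2, 3, 4, 8, 12, 16, 20] = true)
    (hl : leftB (fun i => L.getD i 0) n [2, 3, 4, 8, 12, 16, 20] = true) :
    ∃ σ : Equiv.Perm (Fin n), Bicrucial σ := by
  simp only [List.all_eq_true, List.mem_range, Nat.blt_eq] at hlt
  simp only [List.all_eq_true, List.mem_range, Bool.not_eq_true', Nat.beq_eq, beq_eq_false_iff_ne] at hinj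
  let f : Fin n → Fin n := fun i => ⟨L.getD i 0, hlt i i.2⟩
  have hfi : Function.Injective f := by
    intro a b hab
    have hab' : L.getD a 0 = L.getD b 0 := congrArg Fin.val hab
    rcases lt_trichotomy a b with h | h | h
    · exact absurd hab'.symm (hinj b b.2 a h)
    · exact h
    · exact absurd hab' (hinj a a.2 b h)
  exact ⟨Equiv.ofBijective f (Finite.injective_iff_bijective.mp hfi),
    bicrucial_of_check _ _ (fun a => rfl) _ _ hf hr hl⟩

/-- For every `n ∈ {32, 34, 36, 40, 42, 44, 46}`, there exists a bicrucial
permutation of length `n`. -/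
theorem bicrucial_exists_small_even (n : ℕ)
    (hn : n ∈ ({32, 34, 36, 40, 42, 44, 46} : Finset ℕ)) :
    ∃ σ : Equiv.Perm (Fin n), Bicrucial σ := by
  simp only [Finset.mem_insert, Finset.mem_singleton] at hn
  rcases hn with rfl | rfl | rfl | rfl | rfl | rfl | rfl
  · exact exists_of_list _ [
      26, 30, 31, 1, 0, 25, 29, 28, 21, 24, 27, 18, 2, 19, 23, 20, 13, 17, 22, 4, 3, 12,
      16, 15, 9, 11, 14, 6, 5, 8, 10, 7]
      (by decide +kernel) (by decide +kernel) (by decide +kernel) (by decide +kernel)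
      (by decide +kernel)
  · exact exists_of_list _ [
      0, 33, 29, 26, 30, 32, 31, 22, 23, 27, 18, 17, 24, 28, 25, 12, 15, 21, 13, 10, 16,
      20, 19, 6, 7, 11, 4, 3, 8, 14, 9, 1, 2, 5]
      (by decide +kernel) (by decide +kernel) (by decide +kernel) (by decide +kernel)
      (by decide +kernel)
  · exact exists_of_list _ [
      0, 19, 6, 2, 9, 11, 7, 1, 5, 18, 12, 10, 15, 16, 13, 4, 8, 20, 17, 14, 24, 27, 23,
      3, 22, 34, 28, 26, 31, 32, 29, 21, 25, 35, 33, 30]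
      (by decide +kernel) (by decide +kernel) (by decide +kernel) (by decide +kernel)
      (by decide +kernel)
  · exact exists_of_list _ [
      0, 8, 7, 2, 6, 36, 9, 1, 10, 17, 5, 3, 4, 19, 18, 12, 21, 22, 16, 11, 14, 35, 23,
      20, 26, 30, 24, 13, 15, 32, 31, 27, 34, 37, 29, 25, 28, 39, 38, 33]
      (by decide +kernel) (by decide +kernel) (by decide +kernel) (by decide +kernel)
      (by decide +kernel)
  · exact exists_of_list _ [
      0, 41, 35, 2, 36, 40, 37, 1, 26, 38, 25, 21, 29, 39, 34, 16, 20, 24, 19, 18, 23, 28,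
      27, 15, 17, 22, 14, 9, 31, 33, 32, 4, 8, 12, 7, 6, 11, 30, 13, 3, 5, 10]
      (by decide +kernel) (by decide +kernel) (by decide +kernel) (by decide +kernel)
      (by decide +kernel)
  · exact exists_of_list _ [
      0, 35, 32, 3, 33, 34, 30, 1, 2, 31, 14, 4, 15, 16, 8, 6, 7, 25, 17, 10, 21, 23, 20,
      9, 12, 26, 24, 22, 27, 29, 13, 5, 11, 42, 36, 19, 38, 40, 37, 18, 28, 43, 41, 39]
      (by decide +kernel) (by decide +kernel) (by decide +kernel) (by decide +kernel)
      (by decide +kernel)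
  · exact exists_of_list _ [
      0, 42, 40, 2, 39, 41, 24, 1, 25, 38, 36, 26, 35, 37, 29, 27, 31, 34, 32, 15, 23, 30,
      21, 17, 22, 33, 28, 13, 14, 18, 12, 11, 20, 45, 43, 5, 10, 19, 8, 6, 9, 44, 16, 3,
      4, 7]
      (by decide +kernel) (by decide +kernel) (by decide +kernel) (by decide +kernel)
      (by decide +kernel)
end

section
/- For every integer k ≥ 5 with k ≡ 1 (mod 4), there exists a square-free permutation π of length k such that π_1 = max{π_0, π_1, π_2} and π_{k−1} = k − 1. -/
/-- Auxiliary self-similar sequence (read from the right end of the permutation). -/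
def gSeq (r : ℕ) : ℚ :=
  if _h : r = 0 then 2
  else if r % 4 = 1 then -1 / 2 - 1 / ((r : ℚ) + 2)
  else if r % 4 = 3 then 1 / 2 + 1 / ((r : ℚ) + 2)
  else gSeq (r / 2) / 2
termination_by r
decreasing_by omega

lemma gSeq_zero : gSeq 0 = 2 := by
  rw [gSeq]; simp

lemma gSeq_one (r : ℕ) (h : r % 4 = 1) : gSeq r = -1 / 2 - 1 / ((r : ℚ) + 2) := by
  rw [gSeq, dif_neg (by omega), if_pos h]

lemma gSeq_three (r : ℕ) (h : r % 4 = 3) : gSeq r = 1 / 2 + 1 / ((r : ℚ) + 2) := by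
  rw [gSeq, dif_neg (by omega), if_neg (by omega), if_pos h]

lemma gSeq_even (s : ℕ) (h : s ≠ 0) : gSeq (2 * s) = gSeq s / 2 := by
  rw [gSeq, dif_neg (by omega), if_neg (by omega), if_neg (by omega)]
  congr 2
  omega

lemma inv_bounds (r : ℕ) (h : 1 ≤ r) :
    0 < 1 / ((r : ℚ) + 2) ∧ 1 / ((r : ℚ) + 2) < 1 / 2 := by
  have h1 : (1 : ℚ) ≤ r := by exact_mod_cast h
  refine ⟨by positivity, ?_⟩
  rw [div_lt_div_iff₀ (by linarith) (by norm_num)]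
  linarith

lemma cases4 (r : ℕ) (h : r ≠ 0) :
    r % 4 = 1 ∨ r % 4 = 3 ∨ ∃ s, s ≠ 0 ∧ s < r ∧ r = 2 * s := by
  rcases Nat.even_or_odd' r with ⟨c, hc | hc⟩
  · exact Or.inr (Or.inr ⟨c, by omega, by omega, hc⟩)
  · omega

lemma gSeq_bd (r : ℕ) : r ≠ 0 → -1 < gSeq r ∧ gSeq r < 1 := by
  induction r using Nat.strong_induction_on with
  | _ r ih =>
    intro h
    have hb := inv_bounds r (by omega)
    rcases cases4 r h with h1 | h3 | ⟨s, hs, hlt, rfl⟩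
    · rw [gSeq_one r h1]; constructor <;> linarith [hb.1, hb.2]
    · rw [gSeq_three r h3]; constructor <;> linarith [hb.1, hb.2]
    · rw [gSeq_even s hs]
      have := ih s hlt hs
      constructor <;> linarith [this.1, this.2]

lemma gSeq_one_lt (r : ℕ) (h : r % 4 = 1) : gSeq r < -1 / 2 := by
  rw [gSeq_one r h]; linarith [(inv_bounds r (by omega)).1]

lemma gSeq_three_gt (r : ℕ) (h : r % 4 = 3) : 1 / 2 < gSeq r := by
  rw [gSeq_three r h]; linarith [(inv_bounds r (by omega)).1]

lemma gSeq_even_gt (r : ℕ) (h : r % 2 = 0) : -1 / 2 < gSeq r := by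
  obtain ⟨s, rfl⟩ : ∃ s, r = 2 * s := ⟨r / 2, by omega⟩
  by_cases hs : s = 0
  · subst hs; rw [Nat.mul_zero, gSeq_zero]; norm_num
  · rw [gSeq_even s hs]; linarith [(gSeq_bd s hs).1]

lemma gSeq_even_lt (r : ℕ) (h : r % 2 = 0) (h0 : r ≠ 0) : gSeq r < 1 / 2 := by
  obtain ⟨s, rfl⟩ : ∃ s, r = 2 * s := ⟨r / 2, by omega⟩
  have hs : s ≠ 0 := by omega
  rw [gSeq_even s hs]; linarith [(gSeq_bd s hs).2]

lemma gSeq_max (r : ℕ) (h : r ≠ 0) : gSeq r < gSeq 0 := by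
  rw [gSeq_zero]; linarith [(gSeq_bd r h).2]

lemma gSeq_double (s t : ℕ) : gSeq (2 * s) < gSeq (2 * t) ↔ gSeq s < gSeq t := by
  by_cases hs : s = 0
  · subst hs
    by_cases ht : t = 0
    · subst ht; simp
    · have h1 := gSeq_max (2 * t) (by omega)
      have h2 := gSeq_max t ht
      rw [Nat.mul_zero]
      constructor <;> intro h <;> linarith
  · by_cases ht : t = 0
    · subst ht
      have h1 := gSeq_max (2 * s) (by omega)
      have h2 := gSeq_max s hs
      rw [Nat.mul_zero]
      exact ⟨fun _ => h2, fun _ => h1⟩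
    · rw [gSeq_even s hs, gSeq_even t ht]
      constructor <;> intro h <;> linarith

lemma gSeq_ne (s : ℕ) : ∀ t, gSeq s = gSeq t → s = t := by
  induction s using Nat.strong_induction_on with
  | _ s ih =>
    intro t he
    by_cases hs : s = 0
    · by_contra hne
      subst hs
      linarith [gSeq_max t (fun h => hne h.symm)]
    by_cases ht : t = 0
    · subst ht
      linarith [gSeq_max s hs]
    have inj : 1 / ((s : ℚ) + 2) = 1 / ((t : ℚ) + 2) → s = t := by
      intro h
      have h' : (s : ℚ) + 2 = t + 2 := by simpa using h
      have h'' : (s : ℚ) = t := by linarith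
      exact_mod_cast h''
    rcases cases4 s hs with h1 | h1 | ⟨a, ha, hlt, rfl⟩ <;>
    rcases cases4 t ht with h2 | h2 | ⟨b, hb, hlt2, rfl⟩
    · rw [gSeq_one s h1, gSeq_one t h2] at he
      exact inj (by linarith)
    · linarith [gSeq_one_lt s h1, gSeq_three_gt t h2]
    · linarith [gSeq_one_lt s h1, gSeq_even_gt (2 * b) (by omega)]
    · linarith [gSeq_one_lt t h2, gSeq_three_gt s h1]
    · rw [gSeq_three s h1, gSeq_three t h2] at he
      exact inj (by linarith)
    · linarith [gSeq_three_gt s h1, gSeq_even_lt (2 * b) (by omega) ht]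
    · linarith [gSeq_one_lt t h2, gSeq_even_gt (2 * a) (by omega)]
    · linarith [gSeq_three_gt t h2, gSeq_even_lt (2 * a) (by omega) hs]
    · rw [gSeq_even a ha, gSeq_even b hb] at he
      rw [ih a hlt b (by linarith)]

lemma gSeq_step (n : ℕ) : gSeq n < gSeq (n + 1) ↔ (n % 4 = 1 ∨ n % 4 = 2) := by
  have : n % 4 = 0 ∨ n % 4 = 1 ∨ n % 4 = 2 ∨ n % 4 = 3 := by omega
  rcases this with h | h | h | h
  · have h1 := gSeq_even_gt n (by omega)
    have h2 := gSeq_one_lt (n + 1) (by omega)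
    exact ⟨fun _ => by linarith, fun _ => by omega⟩
  · have h1 := gSeq_one_lt n h
    have h2 := gSeq_even_gt (n + 1) (by omega)
    exact ⟨fun _ => by omega, fun _ => by linarith⟩
  · have h1 := gSeq_even_lt n (by omega) (by omega)
    have h2 := gSeq_three_gt (n + 1) (by omega)
    exact ⟨fun _ => by omega, fun _ => by linarith⟩
  · have h1 := gSeq_three_gt n h
    have h2 := gSeq_even_lt (n + 1) (by omega) (by omega)
    exact ⟨fun _ => by linarith, fun _ => by omega⟩

/-- The infinite sequence has no squares. -/
lemma gSeq_no_square (l : ℕ) : ∀ a, 2 ≤ l →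
    ¬ (∀ i j, i < l → j < l → (gSeq (a + i) < gSeq (a + j) ↔
      gSeq (a + l + i) < gSeq (a + l + j))) := by
  induction l using Nat.strong_induction_on with
  | _ l ih =>
    intro a hl H
    have h1 := H 0 1 (by omega) (by omega)
    rw [Nat.add_zero, Nat.add_zero, gSeq_step, gSeq_step] at h1
    by_cases h2 : l = 2
    · omega
    have h3 := H 1 2 (by omega) (by omega)
    have e1 := gSeq_step (a + 1)
    have e2 := gSeq_step (a + l + 1)
    rw [show a + 1 + 1 = a + 2 by omega] at e1
    rw [show a + l + 1 + 1 = a + l + 2 by omega] at e2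
    rw [e1, e2] at h3
    have hm : l % 4 = 0 := by omega
    refine ih (l / 2) (by omega) ((a + 1) / 2) (by omega) ?_
    intro i j hi hj
    have h := H (2 * ((a + 1) / 2) - a + 2 * i) (2 * ((a + 1) / 2) - a + 2 * j)
      (by omega) (by omega)
    rw [← gSeq_double, ← gSeq_double ((a + 1) / 2 + l / 2 + i)]
    convert h using 3 <;> omega

/-- For every integer `k ≥ 5` with `k ≡ 1 (mod 4)`, there exists a square-free
permutation `π` of length `k` with `π 1 = max {π 0, π 1, π 2}` and `π (k - 1) = k - 1`. -/
theorem squareFree_perm_with_boundary_conditions (k : ℕ) (hk : 5 ≤ k) (hmod : k % 4 = 1) :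
    ∃ π : Equiv.Perm (Fin k), SquareFree ⇑π ∧
      π ⟨1, by omega⟩ = max (max (π ⟨0, by omega⟩) (π ⟨1, by omega⟩)) (π ⟨2, by omega⟩) ∧
      (π ⟨k - 1, by omega⟩ : ℕ) = k - 1 := by

  have hinj : Function.Injective (fun i : Fin k => gSeq (k - 1 - i)) := by
    intro i j h
    have := gSeq_ne _ _ h
    ext
    omega
  set f : Fin k → ℚ := fun i : Fin k => gSeq (k - 1 - i) with hf
  have hmono : StrictMono (f ∘ Tuple.sort f) :=
    (Tuple.monotone_sort f).strictMono_of_injective (hinj.comp (Tuple.sort f).injective)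
  have key : ∀ i j, (Tuple.sort f).symm i < (Tuple.sort f).symm j ↔ f i < f j := by
    intro i j
    rw [← hmono.lt_iff_lt]
    simp
  refine ⟨(Tuple.sort f).symm, ?_, ?_, ?_⟩
  · rintro ⟨a, l, hl, hb, H⟩
    refine gSeq_no_square l (k - a - 2 * l) hl ?_
    intro i j hi hj
    have h := H (l - 1 - i) (l - 1 - j) (by omega) (by omega)
    rw [key, key] at h
    simp only [hf] at h
    rw [show k - 1 - (a + (l - 1 - i)) = k - a - 2 * l + l + i by omega,
      show k - 1 - (a + (l - 1 - j)) = k - a - 2 * l + l + j by omega,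
      show k - 1 - (a + l + (l - 1 - i)) = k - a - 2 * l + i by omega,
      show k - 1 - (a + l + (l - 1 - j)) = k - a - 2 * l + j by omega] at h
    exact h.symm
  · have h1 := gSeq_three_gt (k - 1 - 1) (by omega)
    have h0 := gSeq_even_lt (k - 1 - 0) (by omega) (by omega)
    have h2 := gSeq_even_lt (k - 1 - 2) (by omega) (by omega)
    rw [max_eq_right (le_of_lt ((key _ _).2 (h0.trans h1))),
      max_eq_left (le_of_lt ((key _ _).2 (h2.trans h1)))]
  · set p := (Tuple.sort f).symm ⟨k - 1, by omega⟩ with hp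
    by_contra hne
    have hlt : p < ⟨k - 1, by omega⟩ := by
      rw [Fin.lt_def]
      have := p.isLt
      simp only
      omega
    rw [← (Tuple.sort f).symm_apply_apply ⟨k - 1, by omega⟩, hp, key] at hlt
    simp only [hf] at hlt
    rw [show k - 1 - (k - 1) = 0 by omega] at hlt
    by_cases hz : k - 1 - ((Tuple.sort f) ⟨k - 1, by omega⟩ : ℕ) = 0
    · rw [hz] at hlt; exact lt_irrefl _ hlt
    · exact lt_asymm hlt (gSeq_max _ hz)
end

section
/- Let π be a square-free permutation of length n, and let σ be a permutation of length 2n such that σ_i < ⌈n/2⌉ whenever i ≡ 1 (mod 4), σ_{2j} = π_j + ⌈n/2⌉ for every j ∈ {0,…,n−1}, and σ_i ≥ n + ⌈n/2⌉ whenever i ≡ 3 (mod 4). Then σ is square-free. -/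
/-- High-medium-low construction: if `π` is a square-free permutation of length `n`
and `σ` is a permutation of length `2n` with `σ i < ⌈n/2⌉` whenever `i ≡ 1 (mod 4)`,
`σ (2 j) = π j + ⌈n/2⌉` for every `j < n`, and `σ i ≥ n + ⌈n/2⌉` whenever
`i ≡ 3 (mod 4)`, then `σ` is square-free. -/
theorem high_medium_low_squareFree (n : ℕ) (π : Equiv.Perm (Fin n))
    (σ : Equiv.Perm (Fin (2 * n)))
    (hπ : SquareFree ⇑π)
    (hlow : ∀ i : Fin (2 * n), (i : ℕ) % 4 = 1 → (σ i : ℕ) < (n + 1) / 2)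
    (hmed : ∀ (j : ℕ) (hj : j < n),
      (σ ⟨2 * j, by omega⟩ : ℕ) = (π ⟨j, hj⟩ : ℕ) + (n + 1) / 2)
    (hhigh : ∀ i : Fin (2 * n), (i : ℕ) % 4 = 3 → n + (n + 1) / 2 ≤ (σ i : ℕ)) :
    SquareFree ⇑σ := by
  have hmed' : ∀ i : Fin (2 * n), (i : ℕ) % 2 = 0 →
      (n + 1) / 2 ≤ (σ i : ℕ) ∧ (σ i : ℕ) < n + (n + 1) / 2 := by
    intro i hi
    have hj : (i : ℕ) / 2 < n := by omega
    have h := hmed ((i : ℕ) / 2) hj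
    have e : (⟨2 * ((i : ℕ) / 2), by omega⟩ : Fin (2 * n)) = i := by
      apply Fin.ext
      simp only
      omega
    rw [e] at h
    have := (π ⟨(i : ℕ) / 2, hj⟩).isLt
    omega
  have hasc : ∀ p q : Fin (2 * n), (q : ℕ) = p + 1 →
      (σ p < σ q ↔ (p : ℕ) % 4 = 1 ∨ (p : ℕ) % 4 = 2) := by
    intro p q hq
    rw [Fin.lt_def]
    have h1 := hlow p
    have h2 := hlow q
    have h3 := hmed' p
    have h4 := hmed' q
    have h5 := hhigh p
    have h6 := hhigh q
    have hc : (p : ℕ) % 4 = 0 ∨ (p : ℕ) % 4 = 1 ∨ (p : ℕ) % 4 = 2 ∨ (p : ℕ) % 4 = 3 := by omega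
    rcases hc with hc | hc | hc | hc
    · have := h2 (by omega)
      have := h3 (by omega)
      omega
    · have := h1 (by omega)
      have := h4 (by omega)
      omega
    · have := h3 (by omega)
      have := h6 (by omega)
      omega
    · have := h5 (by omega)
      have := h4 (by omega)
      omega
  rintro ⟨k, l, hl, hb, h⟩
  have hstep : ∀ i, i + 1 < l →
      (((k + i) % 4 = 1 ∨ (k + i) % 4 = 2) ↔ ((k + l + i) % 4 = 1 ∨ (k + l + i) % 4 = 2)) := by
    intro i hi
    have := h i (i + 1) (by omega) hi
    rw [hasc _ _ (by simp only; omega), hasc _ _ (by simp only; omega)] at this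
    exact this
  have h0 := hstep 0 (by omega)
  by_cases h4 : l % 4 = 0
  · apply hπ
    refine ⟨(k + 1) / 2, l / 2, by omega, by omega, ?_⟩
    intro i j hi hj
    have key := h (k % 2 + 2 * i) (k % 2 + 2 * j) (by omega) (by omega)
    have tr : ∀ (a p : ℕ) (ha : a < n) (hp : p < 2 * n), p = 2 * a →
        (σ ⟨p, hp⟩ : ℕ) = (π ⟨a, ha⟩ : ℕ) + (n + 1) / 2 := by
      intro a p ha hp e
      subst e
      exact hmed a ha
    rw [Fin.lt_def, Fin.lt_def,
      tr ((k + 1) / 2 + i) _ (by omega) _ (by omega),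
      tr ((k + 1) / 2 + j) _ (by omega) _ (by omega),
      tr ((k + 1) / 2 + l / 2 + i) _ (by omega) _ (by omega),
      tr ((k + 1) / 2 + l / 2 + j) _ (by omega) _ (by omega)] at key
    rw [Fin.lt_def, Fin.lt_def]
    omega
  · by_cases h2 : l % 4 = 2
    · omega
    · have h1 := hstep 1 (by omega)
      omega
end

section
/- If a permutation σ of length n satisfies the up-up-down-down condition, then every square in σ has length either 4 or a multiple of 8. -/
/-- `σ` satisfies the up-up-down-down condition. -/
def UpUpDownDown {n : ℕ} (σ : Fin n → Fin n) : Prop :=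
  ∀ (i : ℕ) (h : i + 4 ≤ n),
    (σ ⟨i, by omega⟩ < σ ⟨i + 1, by omega⟩ ↔ σ ⟨i + 3, by omega⟩ < σ ⟨i + 2, by omega⟩)

/-- If a permutation satisfies the up-up-down-down condition, then every square in it
has length either 4 or a multiple of 8. -/
theorem square_length_of_upUpDownDown (n : ℕ) (σ : Equiv.Perm (Fin n))
    (h : UpUpDownDown ⇑σ) (k ℓ : ℕ) (hsq : HasSquareAt ⇑σ k ℓ) :
    2 * ℓ = 4 ∨ 8 ∣ 2 * ℓ := by
  obtain ⟨h2, hb, hs⟩ := hsq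
  by_cases h3 : ℓ = 2
  · left; omega
  right
  -- the up/down pattern of σ
  obtain ⟨D, hD⟩ : ∃ D : ℕ → Prop, ∀ (i : ℕ) (hi : i + 1 < n),
      D i ↔ σ ⟨i, by omega⟩ < σ ⟨i + 1, hi⟩ :=
    ⟨fun i => ∃ hi : i + 1 < n, σ ⟨i, by omega⟩ < σ ⟨i + 1, hi⟩,
      fun i hi => ⟨fun ⟨_, q⟩ => q, fun q => ⟨hi, q⟩⟩⟩
  have step : ∀ i, i + 4 ≤ n → (D (i + 2) ↔ ¬ D i) := by
    intro i hi
    rw [hD i (by omega), hD (i + 2) (by omega), h i hi]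
    refine ⟨lt_asymm, fun q => lt_of_le_of_ne (le_of_not_gt q) fun e => ?_⟩
    have e' := congrArg Fin.val (σ.injective e)
    simp at e'
  have per : ∀ m i, i + 4 * m + 2 ≤ n → (D (i + 4 * m) ↔ D i) := by
    intro m
    induction m with
    | zero => intro i _; simp
    | succ m ih =>
      intro i hi
      have a := step (i + 4 * m) (by omega)
      have b := step (i + 4 * m + 2) (by omega)
      have c := ih i (by omega)
      have e : i + 4 * (m + 1) = i + 4 * m + 2 + 2 := by ring
      rw [e]; tauto
  have s0 : D k ↔ D (k + ℓ) := by
    rw [hD k (by omega), hD (k + ℓ) (by omega)]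
    exact hs 0 1 (by omega) (by omega)
  have s1 : D (k + 1) ↔ D (k + ℓ + 1) := by
    rw [hD (k + 1) (by omega), hD (k + ℓ + 1) (by omega)]
    exact hs 1 2 (by omega) (by omega)
  have t0 := step k (by omega)
  have t1 := step (k + 1) (by omega)
  have t2 := step (k + 2) (by omega)
  obtain ⟨m, r, hr, hm⟩ : ∃ m r, r < 4 ∧ ℓ = r + 4 * m := ⟨ℓ / 4, ℓ % 4, by omega, by omega⟩
  have p0 := per m (k + r) (by omega)
  have p1 := per m (k + r + 1) (by omega)
  rw [show k + r + 4 * m = k + ℓ by omega] at p0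
  rw [show k + r + 1 + 4 * m = k + ℓ + 1 by omega] at p1
  interval_cases r
  · omega
  · exfalso; simp only [add_assoc, Nat.reduceAdd] at *; tauto
  · exfalso; tauto
  · exfalso; simp only [add_assoc, Nat.reduceAdd] at *; tauto
end

section
/- The permutation (3, 8, 5, 2, 4, 9, 1, 0, 7, 10, 6) of length 11 is right-crucial. -/
/-- The entries of the permutation, as natural numbers. -/
def exL (i : ℕ) : ℕ := [3, 8, 5, 2, 4, 9, 1, 0, 7, 10, 6].getD i 0

/-- A model of the extension by a last element lying just above the values `< r`. -/
def exM (r i : ℕ) : ℕ := if i < 11 then 2 * exL i + 1 else 2 * r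

theorem exL_free : ∀ ℓ < 6, 2 ≤ ℓ → ∀ k < 12 - 2 * ℓ,
    ∃ i < ℓ, ∃ j < ℓ, ¬ (exL (k + i) < exL (k + j) ↔ exL (k + ℓ + i) < exL (k + ℓ + j)) := by
  decide +kernel

theorem exM_square : ∀ r < 12, ∃ ℓ < 7, 2 ≤ ℓ ∧ ∀ i < ℓ, ∀ j < ℓ,
    (exM r (12 - 2 * ℓ + i) < exM r (12 - 2 * ℓ + j) ↔
      exM r (12 - 2 * ℓ + ℓ + i) < exM r (12 - 2 * ℓ + ℓ + j)) := by
  decide +kernel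

/-- The permutation `(3, 8, 5, 2, 4, 9, 1, 0, 7, 10, 6)` of length 11 is right-crucial. -/
theorem rightCrucial_example_11 (σ : Equiv.Perm (Fin 11))
    (hσ : ∀ i : Fin 11, (σ i : ℕ) = [3, 8, 5, 2, 4, 9, 1, 0, 7, 10, 6].getD (i : ℕ) 0) :
    RightCrucial σ := by
  replace hσ : ∀ i : Fin 11, (σ i : ℕ) = exL i := hσ
  constructor
  · rintro ⟨k, ℓ, h2, hb, h⟩
    obtain ⟨i, hi, j, hj, hn⟩ := exL_free ℓ (by omega) h2 k (by omega)
    apply hn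
    have := h i j hi hj
    simpa only [Fin.lt_def, hσ] using this
  · intro π hπ
    have hex : ∃ r : ℕ, ∀ i : Fin 11, π i.castSucc < π (Fin.last 11) → (σ i : ℕ) < r :=
      ⟨11, fun i _ => (σ i).isLt⟩
    classical
    obtain ⟨r, hr12, hr⟩ : ∃ r < 12, ∀ i : Fin 11,
        π i.castSucc < π (Fin.last 11) ↔ (σ i : ℕ) < r := by
      refine ⟨Nat.find hex, ?_, fun i => ⟨Nat.find_spec hex i, fun hi => ?_⟩⟩
      · have := Nat.find_min' hex (m := 11) (fun i _ => (σ i).isLt)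
        omega
      · have := Nat.find_min hex hi
        push Not at this
        obtain ⟨j, hj, hle⟩ := this
        refine lt_of_le_of_lt ?_ hj
        by_contra hc
        have := (hπ j i).1 (not_le.1 hc)
        rw [Fin.lt_def] at this
        omega
    have key : ∀ a b : Fin 12, π a < π b ↔ exM r a < exM r b := by
      intro a b
      induction a using Fin.lastCases with
      | last =>
        induction b using Fin.lastCases with
        | last => simp
        | cast b =>
          have hne : π b.castSucc ≠ π (Fin.last 11) := fun h =>
            (Fin.castSucc_lt_last b).ne (π.injective h)
          have h1 := hr b
          rw [hσ] at h1
          have h2 : π (Fin.last 11) < π b.castSucc ↔ ¬ π b.castSucc < π (Fin.last 11) :=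
            ⟨fun h => not_lt.2 h.le, fun h => lt_of_le_of_ne (not_lt.1 h) hne.symm⟩
          rw [h2, h1]
          simp [exM]
      | cast a =>
        induction b using Fin.lastCases with
        | last =>
          rw [hr, hσ]
          simp [exM]
          omega
        | cast b =>
          rw [hπ, Fin.lt_def, hσ, hσ]
          simp [exM]
    obtain ⟨ℓ, h7, h2, h⟩ := exM_square r hr12
    refine ⟨12 - 2 * ℓ, ℓ, h2, by omega, fun i j hi hj => ?_⟩
    rw [key, key]
    exact h i hi j hj
end

section
/- The permutation (8, 2, 0, 21, 30, 20, 3, 4, 7, 5, 1, 31, 32, 22, 6, 9, 23, 12, 10, 25, 27, 24, 13, 14, 18, 15, 11, 28, 29, 26, 17, 19, 33, 16) of length 34 is bicrucial. -/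
/-- The displayed sequence. -/
def seqL : List ℕ := [8, 2, 0, 21, 30, 20, 3, 4, 7, 5, 1, 31, 32, 22, 6, 9, 23, 12, 10, 25,
        27, 24, 13, 14, 18, 15, 11, 28, 29, 26, 17, 19, 33, 16]

/-- Boolean test for a square of a sequence of naturals of length `n`. -/
def sqb (w : ℕ → ℕ) (n k l : ℕ) : Bool :=
  decide (2 ≤ l) && (decide (k + 2 * l ≤ n) &&
    (List.range l).all fun i => (List.range l).all fun j =>
      decide (w (k + i) < w (k + j)) == decide (w (k + l + i) < w (k + l + j)))

theorem sqb_iff {n : ℕ} (π : Fin n → Fin n) (w : ℕ → ℕ)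
    (h : ∀ i j : Fin n, π i < π j ↔ w i < w j) (k l : ℕ) :
    HasSquareAt π k l ↔ sqb w n k l = true := by
  simp only [HasSquareAt, sqb, Bool.and_eq_true, decide_eq_true_eq, List.all_eq_true,
    List.mem_range, beq_iff_eq, decide_eq_decide, h]
  constructor
  · rintro ⟨h1, h2, h3⟩
    exact ⟨h1, h2, fun i hi j hj => h3 i j hi hj⟩
  · rintro ⟨h1, h2, h3⟩
    exact ⟨h1, h2, fun i j hi hj => h3 i hi j hj⟩

/-- Right extension model. -/
def wR (t i : ℕ) : ℕ := if i = 34 then 2 * t else 2 * seqL.getD i 0 + 1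

/-- Left extension model. -/
def wL (t i : ℕ) : ℕ := if i = 0 then 2 * t else 2 * seqL.getD (i - 1) 0 + 1

theorem free_check : ∀ l < 18, ∀ k < 34, sqb (fun i => seqL.getD i 0) 34 k l = false := by
  decide +kernel

theorem right_check : ∀ t < 35, ∃ l < 18, sqb (wR t) 35 (35 - 2 * l) l = true := by
  decide +kernel

theorem left_check : ∀ t < 35, ∃ l < 18, sqb (wL t) 35 0 l = true := by
  decide +kernel

theorem exists_threshold {n : ℕ} (σ : Equiv.Perm (Fin n)) (g : Fin n → Fin (n + 1))
    (v : Fin (n + 1)) (hg : ∀ i j, g i < g j ↔ σ i < σ j) :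
    ∃ t < n + 1, ∀ i, g i < v ↔ (σ i : ℕ) < t := by
  refine ⟨(Finset.univ.filter (fun i => g i < v)).sup (fun i => (σ i : ℕ) + 1), ?_, ?_⟩
  · rw [Nat.lt_succ_iff]
    exact Finset.sup_le fun i _ => (σ i).isLt
  · intro i
    rw [Finset.lt_sup_iff]
    constructor
    · intro h
      exact ⟨i, by simpa using h, Nat.lt_succ_self _⟩
    · rintro ⟨j, hj, hij⟩
      have hj' : g j < v := by simpa using hj
      rcases (Nat.lt_succ_iff.mp hij).lt_or_eq with h | h
      · exact lt_trans ((hg i j).2 h) hj'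
      · have : i = j := σ.injective (Fin.ext h)
        rwa [this]

/-- The displayed permutation of length 34 is bicrucial. -/
theorem bicrucial_example_34 (σ : Equiv.Perm (Fin 34))
    (hσ : ∀ i : Fin 34,
      (σ i : ℕ) = [8, 2, 0, 21, 30, 20, 3, 4, 7, 5, 1, 31, 32, 22, 6, 9, 23, 12, 10, 25,
        27, 24, 13, 14, 18, 15, 11, 28, 29, 26, 17, 19, 33, 16].getD (i : ℕ) 0) :
    Bicrucial σ := by
  change ∀ i : Fin 34, (σ i : ℕ) = seqL.getD (i : ℕ) 0 at hσ
  have hfree : SquareFree ⇑σ := by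
    rintro ⟨k, l, h⟩
    have hl := h.1
    obtain ⟨hb, -⟩ := h.2
    rw [sqb_iff σ (fun i => seqL.getD i 0)
      (fun i j => by simp only [Fin.lt_def, hσ])] at h
    rw [free_check l (by omega) k (by omega)] at h
    exact Bool.false_ne_true h
  refine ⟨⟨hfree, fun π hπ => ?_⟩, ⟨hfree, fun π hπ => ?_⟩⟩
  · obtain ⟨t, ht, H⟩ := exists_threshold σ (fun i => π i.succ) (π 0) hπ
    obtain ⟨l, -, hl⟩ := left_check t ht
    refine ⟨_, l, (sqb_iff π (wL t) ?_ _ l).2 hl⟩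
    have hL0 : wL t ((0 : Fin 35) : ℕ) = 2 * t := by simp [wL]
    have hLs : ∀ i : Fin 34, wL t (i.succ : ℕ) = 2 * (σ i : ℕ) + 1 := by
      intro i; simp [wL, hσ]
    intro i j
    refine Fin.cases ?_ (fun i => ?_) i <;> refine Fin.cases ?_ (fun j => ?_) j
    · simp
    · have h1 := H j
      have h2 : π 0 ≠ π j.succ := fun h => absurd (π.injective h) (Fin.succ_ne_zero j).symm
      simp only [hL0, hLs]
      rw [← not_iff_not, not_lt, le_iff_lt_or_eq, or_iff_left h2.symm, h1]
      omega
    · have h1 := H i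
      simp only [hL0, hLs]
      rw [h1]
      omega
    · rw [hπ i j, hLs, hLs, Fin.lt_def]
      omega
  · obtain ⟨t, ht, H⟩ := exists_threshold σ (fun i => π i.castSucc) (π (Fin.last 34)) hπ
    obtain ⟨l, -, hl⟩ := right_check t ht
    refine ⟨_, l, (sqb_iff π (wR t) ?_ _ l).2 hl⟩
    have hL0 : wR t (Fin.last 34 : ℕ) = 2 * t := by simp [wR]
    have hLs : ∀ i : Fin 34, wR t (i.castSucc : ℕ) = 2 * (σ i : ℕ) + 1 := by
      intro i
      have : (i : ℕ) ≠ 34 := by omega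
      simp only [wR, Fin.val_castSucc, hσ, if_neg this]
    intro i j
    refine Fin.lastCases ?_ (fun i => ?_) i <;> refine Fin.lastCases ?_ (fun j => ?_) j
    · simp
    · have h1 := H j
      have h2 : π (Fin.last 34) ≠ π j.castSucc :=
        fun h => absurd (π.injective h) (Fin.castSucc_lt_last j).ne'
      rw [hL0, hLs]
      rw [← not_iff_not, not_lt, le_iff_lt_or_eq, or_iff_left h2.symm, h1]
      omega
    · have h1 := H i
      rw [hL0, hLs, h1]
      omega
    · rw [hπ i j, hLs, hLs, Fin.lt_def]
      omega
end

section
/- The number of bicrucial permutations of length 9 is exactly 54. -/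
namespace Bic

/-- Boolean equality, by cases (cheap for the kernel). -/
def eqB (p q : Bool) : Bool := cond p q (cond q false true)

/-- Four numbers `a, x` and `b, y` compare in the same way. -/
def same (a x b y : ℕ) : Bool :=
  cond (Nat.blt a x) (Nat.blt b y) (cond (Nat.blt b y) false (eqB (Nat.blt x a) (Nat.blt y b)))

def iso2 (a b c d : ℕ) : Bool := same a b c d

def iso3 (a b c d e f : ℕ) : Bool :=
  cond (same a b d e) (cond (same b c e f) (same a c d f) false) false

def iso4 (a b c d e f g h : ℕ) : Bool :=
  cond (iso3 a b c e f g) (cond (same c d g h) (cond (same a d e h) (same b d f h) false) false) false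

def iso5 (a b c d e f g h i j : ℕ) : Bool :=
  cond (iso4 a b c d f g h i) (cond (same d e i j) (cond (same a e f j)
    (cond (same b e g j) (same c e h j) false) false) false) false

/-- Does the list start with a square of half-length between 2 and 5? -/
def sqPre (l : List ℕ) : Bool :=
  l.casesOn false fun a l => l.casesOn false fun b l => l.casesOn false fun c l =>
  l.casesOn false fun d l => cond (iso2 a b c d) true <|
  l.casesOn false fun e l => l.casesOn false fun f l => cond (iso3 a b c d e f) true <|
  l.casesOn false fun g l => l.casesOn false fun h l => cond (iso4 a b c d e f g h) true <|
  l.casesOn false fun i l => l.casesOn false fun j _ => iso5 a b c d e f g h i j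

def sqfree : List ℕ → Bool
  | [] => true
  | a :: l => cond (sqPre (a :: l)) false (sqfree l)

/-- `force x k = k x`, but the kernel evaluates `x` to a literal first. -/
def force {α : Type} (x : ℕ) (k : ℕ → α) : α :=
  Nat.rec (motive := fun _ => α) (k 0) (fun n _ => k n) (Nat.succ x)

def bump (a x : ℕ) : ℕ := cond (Nat.blt x a) x (Nat.succ x)

/-- The map `x ↦ 2x+1`, leaving even numbers as gaps. -/
def odd (x : ℕ) : ℕ := Nat.succ (Nat.add x x)

/-- `mapK f l k = k (l.map f)`, but the kernel evaluates all entries to literals first. -/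
def mapK {α : Type} (f : ℕ → ℕ) : List ℕ → (List ℕ → α) → α
  | [], k => k []
  | x :: l, k => force (f x) fun y => mapK f l fun l' => k (y :: l')

/-- All square-free extensions of a pattern `l` at the left by a value `< n`.
Here `o` is `l.map odd`. -/
def exts (l o : List ℕ) : ℕ → List (List ℕ)
  | 0 => []
  | n + 1 => force n fun a => force (Nat.add a a) fun d =>
      cond (sqPre (d :: o)) (exts l o n) (mapK (bump a) l fun t => (a :: t) :: exts l o n)

def gen : ℕ → List (List ℕ)
  | 0 => [[]]
  | n + 1 => (gen n).flatMap fun l => mapK odd l fun o => exts l o (n + 1)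

def leftC (o : List ℕ) : ℕ → Bool
  | 0 => true
  | n + 1 => force (Nat.add n n) fun d => cond (sqPre (d :: o)) (leftC o n) false

def rightC (o : List ℕ) : ℕ → Bool
  | 0 => true
  | n + 1 => force (Nat.add n n) fun d => cond (sqfree (o ++ [d])) false (rightC o n)

def result : List (List ℕ) :=
  (gen 9).filter fun l => mapK odd l fun o => cond (leftC o 10) (rightC o 10) false

def table : List (List ℕ) :=
  [[7, 4, 6, 8, 5, 1, 2, 3, 0],
   [7, 3, 6, 8, 5, 1, 2, 4, 0],
   [7, 2, 6, 8, 5, 1, 3, 4, 0],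
   [7, 1, 6, 8, 5, 2, 3, 4, 0],
   [7, 0, 6, 8, 5, 2, 3, 4, 1],
   [8, 3, 6, 7, 4, 1, 2, 5, 0],
   [8, 2, 6, 7, 4, 1, 3, 5, 0],
   [8, 1, 6, 7, 4, 2, 3, 5, 0],
   [8, 0, 6, 7, 4, 2, 3, 5, 1],
   [8, 3, 5, 7, 4, 1, 2, 6, 0],
   [8, 2, 5, 7, 4, 1, 3, 6, 0],
   [8, 1, 5, 7, 4, 2, 3, 6, 0],
   [8, 0, 5, 7, 4, 2, 3, 6, 1],
   [8, 3, 5, 6, 4, 1, 2, 7, 0],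
   [7, 3, 5, 6, 4, 1, 2, 8, 0],
   [8, 2, 5, 6, 4, 1, 3, 7, 0],
   [7, 2, 5, 6, 4, 1, 3, 8, 0],
   [8, 1, 5, 6, 4, 2, 3, 7, 0],
   [7, 1, 5, 6, 4, 2, 3, 8, 0],
   [8, 0, 5, 6, 4, 2, 3, 7, 1],
   [7, 0, 5, 6, 4, 2, 3, 8, 1],
   [7, 5, 6, 8, 4, 0, 2, 3, 1],
   [8, 5, 6, 7, 3, 0, 2, 4, 1],
   [8, 4, 6, 7, 3, 0, 2, 5, 1],
   [8, 4, 5, 7, 3, 0, 2, 6, 1],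
   [8, 4, 5, 6, 3, 0, 2, 7, 1],
   [7, 4, 5, 6, 3, 0, 2, 8, 1],
   [1, 4, 3, 2, 5, 8, 6, 0, 7],
   [0, 4, 3, 2, 5, 8, 6, 1, 7],
   [0, 4, 3, 1, 5, 8, 6, 2, 7],
   [0, 4, 2, 1, 5, 8, 6, 3, 7],
   [0, 3, 2, 1, 5, 8, 6, 4, 7],
   [1, 3, 2, 0, 4, 8, 6, 5, 7],
   [1, 8, 3, 2, 4, 6, 5, 0, 7],
   [0, 8, 3, 2, 4, 6, 5, 1, 7],
   [1, 7, 3, 2, 4, 6, 5, 0, 8],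
   [0, 7, 3, 2, 4, 6, 5, 1, 8],
   [1, 6, 3, 2, 4, 7, 5, 0, 8],
   [0, 6, 3, 2, 4, 7, 5, 1, 8],
   [1, 5, 3, 2, 4, 7, 6, 0, 8],
   [0, 5, 3, 2, 4, 7, 6, 1, 8],
   [0, 8, 3, 1, 4, 6, 5, 2, 7],
   [0, 7, 3, 1, 4, 6, 5, 2, 8],
   [0, 6, 3, 1, 4, 7, 5, 2, 8],
   [0, 5, 3, 1, 4, 7, 6, 2, 8],
   [0, 8, 2, 1, 4, 6, 5, 3, 7],
   [0, 7, 2, 1, 4, 6, 5, 3, 8],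
   [0, 6, 2, 1, 4, 7, 5, 3, 8],
   [0, 5, 2, 1, 4, 7, 6, 3, 8],
   [1, 8, 2, 0, 3, 6, 5, 4, 7],
   [1, 7, 2, 0, 3, 6, 5, 4, 8],
   [1, 6, 2, 0, 3, 7, 5, 4, 8],
   [1, 5, 2, 0, 3, 7, 6, 4, 8],
   [1, 4, 2, 0, 3, 7, 6, 5, 8]]

theorem result_eq : result = table := by decide +kernel

theorem table_nodup : table.Nodup := by decide +kernel

theorem table_length : table.length = 54 := by decide +kernel


theorem same_iff (a x b y : ℕ) :
    same a x b y = true ↔ ((a < x ↔ b < y) ∧ (x < a ↔ y < b)) := by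
  have hb : ∀ p q : ℕ, Nat.blt p q = decide (p < q) := by
    intro p q
    rw [Bool.eq_iff_iff, Nat.blt_eq, decide_eq_true_iff]
  unfold same eqB
  rw [hb, hb, hb, hb]
  by_cases h1 : a < x <;> by_cases h2 : b < y <;> by_cases h3 : x < a <;> by_cases h4 : y < b <;>
    simp [h1, h2, h3, h4] <;> omega

theorem cond_and (p q : Bool) : cond p q false = true ↔ p = true ∧ q = true := by
  cases p <;> simp

theorem cond_or (p q : Bool) : cond p true q = true ↔ p = true ∨ q = true := by
  cases p <;> simp

/-- `l` has a square of half-length `m` at position `k`. -/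
def HasSq (l : List ℕ) (k m : ℕ) : Prop :=
  2 ≤ m ∧ k + 2 * m ≤ l.length ∧ ∀ i < m, ∀ j < m,
    (l.getD (k + i) 0 < l.getD (k + j) 0 ↔ l.getD (k + m + i) 0 < l.getD (k + m + j) 0)

theorem hasSq2 (a b c d : ℕ) (t : List ℕ) :
    HasSq (a :: b :: c :: d :: t) 0 2 ↔ iso2 a b c d = true := by
  simp only [HasSq, iso2, same_iff, Nat.forall_lt_succ_right]
  simp

theorem hasSq3 (a b c d e f : ℕ) (t : List ℕ) :
    HasSq (a :: b :: c :: d :: e :: f :: t) 0 3 ↔ iso3 a b c d e f = true := by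
  simp only [HasSq, iso3, same_iff, Nat.forall_lt_succ_right, cond_and]
  simp
  constructor <;>
    (intro hh; casesm* _ ∧ _; repeat' apply And.intro) <;> assumption

theorem hasSq4 (a b c d e f g h : ℕ) (t : List ℕ) :
    HasSq (a :: b :: c :: d :: e :: f :: g :: h :: t) 0 4 ↔ iso4 a b c d e f g h = true := by
  simp only [HasSq, iso4, iso3, same_iff, Nat.forall_lt_succ_right, cond_and]
  simp
  constructor <;>
    (intro hh; casesm* _ ∧ _; repeat' apply And.intro) <;> assumption

theorem hasSq5 (a b c d e f g h i j : ℕ) (t : List ℕ) :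
    HasSq (a :: b :: c :: d :: e :: f :: g :: h :: i :: j :: t) 0 5 ↔
      iso5 a b c d e f g h i j = true := by
  simp only [HasSq, iso5, iso4, iso3, same_iff, Nat.forall_lt_succ_right, cond_and]
  simp
  constructor <;>
    (intro hh; casesm* _ ∧ _; repeat' apply And.intro) <;> assumption

theorem hasSq_short {l : List ℕ} {k m : ℕ} (h : l.length < k + 2 * m) : ¬ HasSq l k m := by
  rintro ⟨_, h2, _⟩
  omega

theorem sqPre_iff (l : List ℕ) (hl : l.length ≤ 11) :
    sqPre l = true ↔ ∃ m, HasSq l 0 m := by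
  have key : (∃ m, HasSq l 0 m) ↔
      HasSq l 0 2 ∨ HasSq l 0 3 ∨ HasSq l 0 4 ∨ HasSq l 0 5 := by
    constructor
    · rintro ⟨m, hm⟩
      have h1 := hm.1
      have h2 := hm.2.1
      have h3 : m ≤ 5 := by omega
      interval_cases m <;> simp [hm]
    · rintro (h | h | h | h) <;> exact ⟨_, h⟩
  rw [key]
  clear key
  rcases l with _ | ⟨a, _ | ⟨b, _ | ⟨c, _ | ⟨d, _ | ⟨e, _ | ⟨f, _ | ⟨g, _ | ⟨h, _ | ⟨i, _ | ⟨j, t⟩⟩⟩⟩⟩⟩⟩⟩⟩⟩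
  all_goals
    simp only [hasSq2, hasSq3, hasSq4, hasSq5, sqPre, cond_or]
    try simp [hasSq_short]

theorem sqfree_iff (l : List ℕ) (hl : l.length ≤ 11) :
    sqfree l = true ↔ ¬ ∃ k m, HasSq l k m := by
  induction l with
  | nil =>
    simp only [sqfree, true_iff]
    rintro ⟨k, m, h1, h2, _⟩
    simp at h2
    omega
  | cons a l ih =>
    have ih := ih (by simp at hl; omega)
    have hs : ∀ k m, HasSq (a :: l) (k + 1) m ↔ HasSq l k m := by
      intro k m
      unfold HasSq
      have e1 : ∀ i, k + 1 + i = (k + i) + 1 := by intro i; omega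
      have e2 : ∀ i, k + m + 1 + i = (k + m + i) + 1 := by intro i; omega
      simp only [e1, e2, List.getD_cons_succ, List.length_cons]
      have e3 : k + 2 * m + 1 ≤ l.length + 1 ↔ k + 2 * m ≤ l.length := by omega
      rw [e3]
    have hp := sqPre_iff (a :: l) hl
    have hc : sqfree (a :: l) = true ↔ ¬ sqPre (a :: l) = true ∧ sqfree l = true := by
      simp only [sqfree]
      cases sqPre (a :: l) <;> simp
    rw [hc, hp, ih, ← not_or]
    apply not_congr
    constructor
    · rintro (⟨m, h⟩ | ⟨k, m, h⟩)
      · exact ⟨0, m, h⟩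
      · exact ⟨k + 1, m, (hs k m).2 h⟩
    · rintro ⟨k, m, h⟩
      cases k with
      | zero => exact Or.inl ⟨m, h⟩
      | succ k => exact Or.inr ⟨k, m, (hs k m).1 h⟩

/-- The list of values of a function. -/
def toL {n : ℕ} (σ : Fin n → Fin n) : List ℕ := List.ofFn fun i => (σ i : ℕ)

theorem toL_getD {n : ℕ} (σ : Fin n → Fin n) (i : ℕ) (h : i < n) :
    (toL σ).getD i 0 = (σ ⟨i, h⟩ : ℕ) := by
  simp [toL, List.getD, h]

theorem squareFree_iff {n : ℕ} (hn : n ≤ 11) (σ : Fin n → Fin n) :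
    SquareFree σ ↔ sqfree (toL σ) = true := by
  rw [sqfree_iff _ (by simpa [toL] using hn)]
  apply not_congr
  apply exists_congr
  intro k
  apply exists_congr
  intro m
  unfold HasSquareAt HasSq
  apply and_congr_right
  intro _
  have hlen : (toL σ).length = n := by simp [toL]
  rw [hlen]
  constructor
  · rintro ⟨hb, h⟩
    refine ⟨hb, fun i hi j hj => ?_⟩
    rw [toL_getD _ _ (by omega), toL_getD _ _ (by omega), toL_getD _ _ (by omega),
      toL_getD _ _ (by omega)]
    exact h i j hi hj
  · rintro ⟨hb, h⟩
    refine ⟨hb, fun i j hi hj => ?_⟩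
    have := h i hi j hj
    rw [toL_getD _ _ (by omega), toL_getD _ _ (by omega), toL_getD _ _ (by omega),
      toL_getD _ _ (by omega)] at this
    exact this

/-! ### Invariance under strictly monotone maps -/

theorem same_map {f : ℕ → ℕ} (hf : StrictMono f) (a x b y : ℕ) :
    same (f a) (f x) (f b) (f y) = same a x b y := by
  rw [Bool.eq_iff_iff, same_iff, same_iff]
  simp only [hf.lt_iff_lt]

theorem sqPre_map {f : ℕ → ℕ} (hf : StrictMono f) (l : List ℕ) :
    sqPre (l.map f) = sqPre l := by
  rcases l with _ | ⟨a, _ | ⟨b, _ | ⟨c, _ | ⟨d, _ | ⟨e, _ | ⟨f, _ | ⟨g, _ | ⟨h, _ | ⟨i, _ | ⟨j, t⟩⟩⟩⟩⟩⟩⟩⟩⟩⟩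
  all_goals
    simp only [sqPre, List.map, iso2, iso3, iso4, iso5, same_map hf]

theorem sqfree_map {f : ℕ → ℕ} (hf : StrictMono f) (l : List ℕ) :
    sqfree (l.map f) = sqfree l := by
  induction l with
  | nil => rfl
  | cons a l ih =>
    have := sqPre_map hf (a :: l)
    rw [List.map_cons] at this
    simp only [List.map_cons, sqfree, this, ih]

theorem bump_eq (a x : ℕ) : bump a x = if x < a then x else x + 1 := by
  unfold bump
  by_cases h : x < a
  · rw [show Nat.blt x a = true by rw [Nat.blt_eq]; exact h, if_pos h]; rfl
  · have : Nat.blt x a = false := by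
      rw [← Bool.not_eq_true, Nat.blt_eq]; exact h
    rw [this, if_neg h]; rfl

theorem bump_strictMono (a : ℕ) : StrictMono (bump a) := by
  intro x y h
  rw [bump_eq, bump_eq]
  split_ifs <;> omega

/-- A strictly monotone map carrying `a` to `2a` and `bump a x` to `2x+1`. -/
def spread (a y : ℕ) : ℕ := if y < a then 2 * y + 1 else if y = a then 2 * a else 2 * y - 1

theorem spread_strictMono (a : ℕ) : StrictMono (spread a) := by
  intro x y h
  unfold spread
  split_ifs <;> omega

theorem spread_self (a : ℕ) : spread a a = a.add a := by
  have : a.add a = a + a := rfl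
  simp [spread]
  omega

theorem spread_bump (a : ℕ) (l : List ℕ) : (l.map (bump a)).map (spread a) = l.map odd := by
  rw [List.map_map]
  apply List.map_congr_left
  intro x _
  have h1 : odd x = x + x + 1 := rfl
  simp only [Function.comp, bump_eq, spread, h1]
  split_ifs <;> omega

theorem sqPre_odd (a : ℕ) (l : List ℕ) :
    sqPre (a.add a :: l.map odd) = sqPre (a :: l.map (bump a)) := by
  rw [← sqPre_map (spread_strictMono a) (a :: l.map (bump a)), List.map_cons, spread_bump,
    spread_self]

theorem sqfree_odd (a : ℕ) (l : List ℕ) :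
    sqfree (l.map odd ++ [a.add a]) = sqfree (l.map (bump a) ++ [a]) := by
  rw [← sqfree_map (spread_strictMono a) (l.map (bump a) ++ [a]), List.map_append, spread_bump,
    List.map_cons, spread_self, List.map_nil]

/-! ### Specification of the generator -/

theorem force_eq {α : Type} (x : ℕ) (k : ℕ → α) : force x k = k x := rfl

theorem mapK_eq {α : Type} (f : ℕ → ℕ) (l : List ℕ) (k : List ℕ → α) :
    mapK f l k = k (l.map f) := by
  induction l generalizing k with
  | nil => rfl
  | cons x l ih => simp only [mapK, force_eq, ih, List.map_cons]

theorem mem_exts (l l' : List ℕ) (n : ℕ) :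
    l' ∈ exts l (l.map odd) n ↔
      ∃ a < n, sqPre (a :: l.map (bump a)) = false ∧ l' = a :: l.map (bump a) := by
  induction n with
  | zero => simp [exts]
  | succ n ih =>
    simp only [exts, force_eq, mapK_eq, sqPre_odd]
    have hsplit : (∃ a < n + 1, sqPre (a :: l.map (bump a)) = false ∧ l' = a :: l.map (bump a)) ↔
        (sqPre (n :: l.map (bump n)) = false ∧ l' = n :: l.map (bump n)) ∨
        ∃ a < n, sqPre (a :: l.map (bump a)) = false ∧ l' = a :: l.map (bump a) := by
      constructor
      · rintro ⟨a, ha, h⟩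
        rcases Nat.lt_succ_iff_lt_or_eq.1 ha with h1 | rfl
        · exact Or.inr ⟨a, h1, h⟩
        · exact Or.inl h
      · rintro (h | ⟨a, ha, h⟩)
        · exact ⟨n, by omega, h⟩
        · exact ⟨a, by omega, h⟩
    rw [hsplit, ← ih]
    cases sqPre (n :: l.map (bump n)) <;> simp

def PermList (n : ℕ) (l : List ℕ) : Prop := l.length = n ∧ l.Nodup ∧ ∀ x ∈ l, x < n

theorem permList_succ (n : ℕ) (l' : List ℕ) :
    PermList (n + 1) l' ↔ ∃ l, PermList n l ∧ ∃ a < n + 1, l' = a :: l.map (bump a) := by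
  constructor
  · rintro ⟨h1, h2, h3⟩
    rcases l' with _ | ⟨a, t⟩
    · simp at h1
    have hat : a ∉ t := (List.nodup_cons.1 h2).1
    have hnd : t.Nodup := (List.nodup_cons.1 h2).2
    have ha : a < n + 1 := h3 a (by simp)
    have ht : ∀ x ∈ t, x < n + 1 := fun x hx => h3 x (by simp [hx])
    have hback : (t.map fun x => if x < a then x else x - 1).map (bump a) = t := by
      rw [List.map_map]
      conv_rhs => rw [← List.map_id t]
      apply List.map_congr_left
      intro x hx
      have : x ≠ a := fun h => hat (h ▸ hx)
      simp only [Function.comp, bump_eq, id]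
      split_ifs <;> omega
    refine ⟨t.map fun x => if x < a then x else x - 1, ⟨?_, ?_, ?_⟩, a, ha, by rw [hback]⟩
    · simpa using h1
    · apply List.Nodup.of_map (bump a)
      rw [hback]
      exact hnd
    · intro x hx
      obtain ⟨y, hy, rfl⟩ := List.mem_map.1 hx
      have h4 := ht y hy
      have h5 : y ≠ a := fun h => hat (h ▸ hy)
      split_ifs <;> omega
  · rintro ⟨l, ⟨h1, h2, h3⟩, a, ha, rfl⟩
    refine ⟨by simp [h1], ?_, ?_⟩
    · rw [List.nodup_cons]
      refine ⟨?_, h2.map (bump_strictMono a).injective⟩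
      intro h
      obtain ⟨y, _, hy⟩ := List.mem_map.1 h
      rw [bump_eq] at hy
      split_ifs at hy <;> omega
    · intro x hx
      rcases List.mem_cons.1 hx with rfl | hx
      · exact ha
      obtain ⟨y, hy, rfl⟩ := List.mem_map.1 hx
      have := h3 y hy
      rw [bump_eq]
      split_ifs <;> omega

theorem sqfree_ext (a : ℕ) (l : List ℕ) : sqfree (a :: l.map (bump a)) = true ↔
    sqPre (a :: l.map (bump a)) = false ∧ sqfree l = true := by
  simp only [sqfree, sqfree_map (bump_strictMono a)]
  cases sqPre (a :: l.map (bump a)) <;> simp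

theorem mem_gen (n : ℕ) (l : List ℕ) :
    l ∈ gen n ↔ PermList n l ∧ sqfree l = true := by
  induction n generalizing l with
  | zero =>
    simp only [gen, List.mem_singleton, PermList]
    constructor
    · rintro rfl; simp [sqfree]
    · rintro ⟨⟨h, _⟩, _⟩; exact List.length_eq_zero_iff.1 h
  | succ n ih =>
    simp only [gen, List.mem_flatMap, mapK_eq, mem_exts, permList_succ, ih]
    constructor
    · rintro ⟨t, ⟨h1, h2⟩, a, ha, h3, rfl⟩
      exact ⟨⟨t, h1, a, ha, rfl⟩, (sqfree_ext a t).2 ⟨h3, h2⟩⟩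
    · rintro ⟨⟨t, h1, a, ha, rfl⟩, h⟩
      have := (sqfree_ext a t).1 h
      exact ⟨t, ⟨h1, this.2⟩, a, ha, this.1, rfl⟩

theorem leftC_iff (l : List ℕ) (n : ℕ) :
    leftC (l.map odd) n = true ↔ ∀ a < n, sqPre (a :: l.map (bump a)) = true := by
  induction n with
  | zero => simp [leftC]
  | succ n ih => simp only [leftC, force_eq, sqPre_odd, cond_and, ih, Nat.forall_lt_succ_right,
      and_comm]

theorem rightC_iff (l : List ℕ) (n : ℕ) :
    rightC (l.map odd) n = true ↔ ∀ a < n, ¬ sqfree (l.map (bump a) ++ [a]) = true := by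
  induction n with
  | zero => simp [rightC]
  | succ n ih =>
    simp only [rightC, force_eq, sqfree_odd, Nat.forall_lt_succ_right, ← ih]
    cases sqfree (l.map (bump n) ++ [n]) <;> simp

theorem mem_result (l : List ℕ) : l ∈ result ↔ PermList 9 l ∧ sqfree l = true ∧
    (∀ a < 10, ¬ sqfree (a :: l.map (bump a)) = true) ∧
    (∀ a < 10, ¬ sqfree (l.map (bump a) ++ [a]) = true) := by
  simp only [result, List.mem_filter, mem_gen, mapK_eq, cond_and, leftC_iff, rightC_iff, and_assoc,
    sqfree_ext]
  apply and_congr_right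
  intro _
  apply and_congr_right
  intro h
  simp [h]

/-! ### Extensions -/

theorem succAbove_val {n : ℕ} (a : Fin (n + 1)) (x : Fin n) :
    ((a.succAbove x : Fin (n + 1)) : ℕ) = bump a x := by
  rw [bump_eq, Fin.succAbove]
  simp only [Fin.lt_def, Fin.val_castSucc]
  split_ifs <;> simp

theorem ext_unique {n : ℕ} (σ : Equiv.Perm (Fin n)) (a : Fin (n + 1)) (f : Fin n → Fin (n + 1))
    (hne : ∀ i, f i ≠ a) (h : ∀ i j, f i < f j ↔ σ i < σ j) (i : Fin n) :
    f i = a.succAbove (σ i) := by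
  have hex : ∀ i, ∃ y, a.succAbove y = f i := fun i => Fin.exists_succAbove_eq (hne i)
  choose τ hτ using hex
  have hm : StrictMono (τ ∘ σ.symm) := by
    intro x y hxy
    have h1 := (h (σ.symm x) (σ.symm y)).2 (by simpa using hxy)
    rw [← hτ, ← hτ] at h1
    exact (Fin.strictMono_succAbove a).lt_iff_lt.1 h1
  have hid : τ ∘ σ.symm = id := by
    have hs := Finite.surjective_of_injective hm.injective
    apply (StrictMono.range_inj hm strictMono_id).1
    rw [hs.range_eq]
    simp
  have := congrFun hid (σ i)
  simp at this
  rw [← hτ, this]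

theorem toL_cons {n : ℕ} (σ : Fin n → Fin n) (a : Fin (n + 1)) (π : Fin (n + 1) → Fin (n + 1))
    (h0 : π 0 = a) (h : ∀ i : Fin n, π i.succ = a.succAbove (σ i)) :
    toL π = (a : ℕ) :: (toL σ).map (bump a) := by
  unfold toL
  rw [List.ofFn_succ, h0, List.map_ofFn]
  congr 2
  funext i
  rw [h, succAbove_val]
  rfl

theorem toL_snoc {n : ℕ} (σ : Fin n → Fin n) (a : Fin (n + 1)) (π : Fin (n + 1) → Fin (n + 1))
    (h0 : π (Fin.last n) = a) (h : ∀ i : Fin n, π i.castSucc = a.succAbove (σ i)) :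
    toL π = (toL σ).map (bump a) ++ [(a : ℕ)] := by
  unfold toL
  rw [List.ofFn_succ', h0, List.map_ofFn, List.concat_eq_append]
  congr 2
  funext i
  rw [h, succAbove_val]
  rfl

theorem leftCrucial_iff {n : ℕ} (hn : n ≤ 10) (σ : Equiv.Perm (Fin n)) :
    LeftCrucial σ ↔ sqfree (toL σ) = true ∧
      ∀ a < n + 1, ¬ sqfree (a :: (toL σ).map (bump a)) = true := by
  unfold LeftCrucial
  rw [squareFree_iff (by omega)]
  apply and_congr_right
  intro _
  constructor
  · intro H a ha
    let f : Fin (n + 1) → Fin (n + 1) :=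
      Fin.cons (⟨a, ha⟩ : Fin (n + 1)) fun i => Fin.succAbove ⟨a, ha⟩ (σ i)
    have hf : Function.Injective f := by
      rw [Fin.cons_injective_iff]
      refine ⟨?_, Fin.succAbove_right_injective.comp σ.injective⟩
      rintro ⟨i, hi⟩
      exact Fin.succAbove_ne _ _ hi
    let π : Equiv.Perm (Fin (n + 1)) :=
      Equiv.ofBijective f (Finite.injective_iff_bijective.1 hf)
    have hs : ∀ i : Fin n, π i.succ = Fin.succAbove ⟨a, ha⟩ (σ i) := fun i => by
      simp [π, f]
    have h0 : π 0 = ⟨a, ha⟩ := by simp [π, f]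
    have hc := H π (fun i j => by
      rw [hs, hs]; exact (Fin.strictMono_succAbove _).lt_iff_lt)
    have e := toL_cons σ _ π h0 hs
    rw [← e, ← squareFree_iff (by omega)]
    exact not_not.2 hc
  · intro H π hπ
    have hs := ext_unique σ (π 0) (fun i => π i.succ)
      (fun i h => Fin.succ_ne_zero i (π.injective h)) hπ
    have e := toL_cons σ _ π rfl hs
    have := H _ (π 0).2
    rw [← e, ← squareFree_iff (by omega)] at this
    exact not_not.1 this

theorem rightCrucial_iff {n : ℕ} (hn : n ≤ 10) (σ : Equiv.Perm (Fin n)) :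
    RightCrucial σ ↔ sqfree (toL σ) = true ∧
      ∀ a < n + 1, ¬ sqfree ((toL σ).map (bump a) ++ [a]) = true := by
  unfold RightCrucial
  rw [squareFree_iff (by omega)]
  apply and_congr_right
  intro _
  constructor
  · intro H a ha
    let f : Fin (n + 1) → Fin (n + 1) :=
      Fin.snoc (α := fun _ => Fin (n + 1)) (fun i => Fin.succAbove ⟨a, ha⟩ (σ i)) ⟨a, ha⟩
    have hf : Function.Injective f := by
      rw [Fin.snoc_injective_iff]
      refine ⟨Fin.succAbove_right_injective.comp σ.injective, ?_⟩
      rintro ⟨i, hi⟩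
      exact Fin.succAbove_ne _ _ hi
    let π : Equiv.Perm (Fin (n + 1)) :=
      Equiv.ofBijective f (Finite.injective_iff_bijective.1 hf)
    have hs : ∀ i : Fin n, π i.castSucc = Fin.succAbove ⟨a, ha⟩ (σ i) := fun i => by
      simp [π, f]
    have h0 : π (Fin.last n) = ⟨a, ha⟩ := by simp [π, f]
    have hc := H π (fun i j => by
      rw [hs, hs]; exact (Fin.strictMono_succAbove _).lt_iff_lt)
    have e := toL_snoc σ _ π h0 hs
    rw [← e, ← squareFree_iff (by omega)]
    exact not_not.2 hc
  · intro H π hπ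
    have hs := ext_unique σ (π (Fin.last n)) (fun i => π i.castSucc)
      (fun i h => (Fin.castSucc_lt_last i).ne (π.injective h)) hπ
    have e := toL_snoc σ _ π rfl hs
    have := H _ (π (Fin.last n)).2
    rw [← e, ← squareFree_iff (by omega)] at this
    exact not_not.1 this

theorem toL_injective {n : ℕ} {σ τ : Equiv.Perm (Fin n)} (h : toL σ = toL τ) : σ = τ := by
  have := List.ofFn_injective h
  ext i
  exact congrFun this i

theorem permList_toL {n : ℕ} (σ : Equiv.Perm (Fin n)) : PermList n (toL σ) := by
  refine ⟨by simp [toL], ?_, ?_⟩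
  · unfold toL
    rw [List.nodup_ofFn]
    exact Fin.val_injective.comp σ.injective
  · intro x hx
    unfold toL at hx
    obtain ⟨i, rfl⟩ := (List.mem_ofFn' _ _).1 hx
    exact (σ i).2

theorem exists_toL {n : ℕ} {l : List ℕ} (h : PermList n l) :
    ∃ σ : Equiv.Perm (Fin n), toL σ = l := by
  obtain ⟨rfl, h2, h3⟩ := h
  let f : Fin l.length → Fin l.length := fun i => ⟨l.get i, h3 _ (List.get_mem l i)⟩
  have hf : Function.Injective f := by
    intro i j hij
    have : l.get i = l.get j := congrArg Fin.val hij
    exact List.nodup_iff_injective_get.1 h2 this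
  exact ⟨Equiv.ofBijective f (Finite.injective_iff_bijective.1 hf), List.ofFn_get l⟩

theorem bicrucial_iff (σ : Equiv.Perm (Fin 9)) : Bicrucial σ ↔ toL σ ∈ table := by
  rw [← result_eq, mem_result]
  unfold Bicrucial
  rw [leftCrucial_iff (by omega), rightCrucial_iff (by omega)]
  have := permList_toL σ
  tauto

end Bic

/-- The number of bicrucial permutations of length 9 is exactly 54. -/
theorem card_bicrucial_9 :
    Nat.card {σ : Equiv.Perm (Fin 9) // Bicrucial σ} = 54 := by
  let F : {σ : Equiv.Perm (Fin 9) // Bicrucial σ} → {l : List ℕ // l ∈ Bic.table.toFinset} :=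
    fun σ => ⟨Bic.toL σ.1, List.mem_toFinset.2 ((Bic.bicrucial_iff σ.1).1 σ.2)⟩
  have hF : Function.Bijective F := by
    constructor
    · intro σ τ h
      exact Subtype.ext (Bic.toL_injective (congrArg Subtype.val h))
    · rintro ⟨l, hl⟩
      have hl' := List.mem_toFinset.1 hl
      have hp : Bic.PermList 9 l := by
        have := hl'
        rw [← Bic.result_eq, Bic.mem_result] at this
        exact this.1
      obtain ⟨σ, rfl⟩ := Bic.exists_toL hp
      exact ⟨⟨σ, (Bic.bicrucial_iff σ).2 hl'⟩, rfl⟩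
  rw [Nat.card_eq_of_bijective F hF, Nat.card_eq_fintype_card, Fintype.card_coe,
    List.toFinset_card_of_nodup Bic.table_nodup, Bic.table_length]
end

section
/- The number of left-crucial permutations of length 7 is exactly 60, and there are no left-crucial permutations of any length n ≤ 6. -/
/-- One-line notation of a self-map of `Fin n`. -/
def lcList {n : ℕ} (σ : Fin n → Fin n) : List ℕ := List.ofFn fun i => (σ i).val

/-- The first `ℓ` entries are order-isomorphic to the following `ℓ`. -/
def lcIso (l : List ℕ) (ℓ : ℕ) : Bool :=
  (List.range ℓ).all fun i => (List.range ℓ).all fun j =>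
    (Nat.blt (l.getD i 0) (l.getD j 0)) == (Nat.blt (l.getD (ℓ + i) 0) (l.getD (ℓ + j) 0))

/-- The list has a prefix that is a square. -/
def lcPsq (l : List ℕ) : Bool :=
  (List.range (l.length + 1)).any fun ℓ => Nat.ble 2 ℓ && (Nat.ble (2 * ℓ) l.length && lcIso l ℓ)

/-- Left extension with first value `v`. -/
def lcExt (v : ℕ) (l : List ℕ) : List ℕ :=
  v :: l.map fun x => bif Nat.blt x v then x else x + 1

/-- All square-free permutations of length `n`. -/
def lcSf : ℕ → List (List ℕ)
  | 0 => [[]]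
  | n + 1 => (lcSf n).flatMap fun l =>
      ((List.range (n + 1)).map fun v => lcExt v l).filter fun m => !lcPsq m

/-- All left-crucial permutations of length `n`. -/
def lcAll (n : ℕ) : List (List ℕ) :=
  (lcSf n).filter fun l => (List.range (n + 1)).all fun v => lcPsq (lcExt v l)

theorem lcList_getD {n : ℕ} (σ : Fin n → Fin n) (i : ℕ) (h : i < n) :
    (lcList σ).getD i 0 = (σ ⟨i, h⟩).val := by
  simp [lcList, List.getD_eq_getElem?_getD, h]

theorem lcList_inj {n : ℕ} {σ τ : Equiv.Perm (Fin n)} (h : lcList σ = lcList τ) : σ = τ := by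
  ext i
  have := congrArg (fun l => l.getD i.val 0) h
  simp only [lcList_getD _ _ i.isLt] at this
  exact this

theorem lcPsq_iff {n : ℕ} (σ : Fin n → Fin n) :
    lcPsq (lcList σ) = true ↔ ∃ ℓ, HasSquareAt σ 0 ℓ := by
  have hlen : (lcList σ).length = n := by simp [lcList]
  unfold lcPsq lcIso HasSquareAt
  simp only [hlen, List.any_eq_true, List.mem_range, Bool.and_eq_true, Nat.ble_eq,
    List.all_eq_true, beq_iff_eq]
  constructor
  · rintro ⟨ℓ, -, h2, hb, h⟩
    refine ⟨ℓ, h2, by omega, fun i j hi hj => ?_⟩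
    have := h i hi j hj
    rw [Bool.eq_iff_iff, Nat.blt_eq, Nat.blt_eq, lcList_getD _ _ (by omega), lcList_getD _ _ (by omega), lcList_getD _ _ (by omega),
      lcList_getD _ _ (by omega)] at this
    simpa only [Nat.zero_add, Fin.lt_def] using this
  · rintro ⟨ℓ, h2, hb, h⟩
    refine ⟨ℓ, by omega, h2, by omega, fun i hi j hj => ?_⟩
    have := h i j hi hj
    rw [Bool.eq_iff_iff, Nat.blt_eq, Nat.blt_eq, lcList_getD _ _ (by omega), lcList_getD _ _ (by omega), lcList_getD _ _ (by omega),
      lcList_getD _ _ (by omega)]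
    simpa only [Nat.zero_add, Fin.lt_def] using this

theorem lc_shift {n : ℕ} {σ : Fin n → Fin n} {π : Fin (n + 1) → Fin (n + 1)}
    (h : IsLeftExtension σ π) (k ℓ : ℕ) : HasSquareAt π (k + 1) ℓ ↔ HasSquareAt σ k ℓ := by
  have key : ∀ (a b : ℕ) (ha : a < n) (hb : b < n) (a' b' : ℕ) (ha' : a' < n + 1)
      (hb' : b' < n + 1), a' = a + 1 → b' = b + 1 →
      (π ⟨a', ha'⟩ < π ⟨b', hb'⟩ ↔ σ ⟨a, ha⟩ < σ ⟨b, hb⟩) := by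
    intro a b ha hb a' b' ha' hb' h1 h2
    subst h1 h2
    exact h ⟨a, ha⟩ ⟨b, hb⟩
  unfold HasSquareAt
  constructor
  · rintro ⟨h2, hb, H⟩
    refine ⟨h2, by omega, fun i j hi hj => ?_⟩
    have := H i j hi hj
    rwa [key (k + i) (k + j) (by omega) (by omega) _ _ _ _ (by omega) (by omega),
      key (k + ℓ + i) (k + ℓ + j) (by omega) (by omega) _ _ _ _ (by omega) (by omega)] at this
  · rintro ⟨h2, hb, H⟩
    refine ⟨h2, by omega, fun i j hi hj => ?_⟩
    have := H i j hi hj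
    rwa [key (k + i) (k + j) (by omega) (by omega) _ _ _ _ (by omega) (by omega),
      key (k + ℓ + i) (k + ℓ + j) (by omega) (by omega) _ _ _ _ (by omega) (by omega)]

theorem lc_contains {n : ℕ} {σ : Fin n → Fin n} {π : Fin (n + 1) → Fin (n + 1)}
    (h : IsLeftExtension σ π) :
    ContainsSquare π ↔ lcPsq (lcList π) = true ∨ ContainsSquare σ := by
  rw [lcPsq_iff]
  constructor
  · rintro ⟨k, ℓ, H⟩
    cases k with
    | zero => exact Or.inl ⟨ℓ, H⟩
    | succ k => exact Or.inr ⟨k, ℓ, (lc_shift h k ℓ).1 H⟩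
  · rintro (⟨ℓ, H⟩ | ⟨k, ℓ, H⟩)
    · exact ⟨0, ℓ, H⟩
    · exact ⟨k + 1, ℓ, (lc_shift h k ℓ).2 H⟩

/-- The concrete left extension of `σ` by the first value `v`. -/
noncomputable def lcCons {n : ℕ} (v : Fin (n + 1)) (σ : Equiv.Perm (Fin n)) :
    Equiv.Perm (Fin (n + 1)) :=
  Equiv.ofBijective (Fin.cons v fun i => v.succAbove (σ i) : Fin (n + 1) → Fin (n + 1)) <| by
    apply Finite.injective_iff_bijective.1
    rw [Fin.cons_injective_iff]
    refine ⟨?_, fun i j h => σ.injective (Fin.succAbove_right_injective h)⟩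
    rintro ⟨i, hi⟩
    exact Fin.succAbove_ne _ _ hi

theorem lcCons_zero {n : ℕ} (v : Fin (n + 1)) (σ : Equiv.Perm (Fin n)) : lcCons v σ 0 = v := rfl

theorem lcCons_succ {n : ℕ} (v : Fin (n + 1)) (σ : Equiv.Perm (Fin n)) (i : Fin n) :
    lcCons v σ i.succ = v.succAbove (σ i) := rfl

theorem lcCons_ext {n : ℕ} (v : Fin (n + 1)) (σ : Equiv.Perm (Fin n)) :
    IsLeftExtension σ (lcCons v σ) := by
  intro i j
  rw [lcCons_succ, lcCons_succ, Fin.succAbove_lt_succAbove_iff]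

theorem lcCons_list {n : ℕ} (v : Fin (n + 1)) (σ : Equiv.Perm (Fin n)) :
    lcList (lcCons v σ) = lcExt v (lcList σ) := by
  unfold lcList lcExt
  rw [List.ofFn_succ, List.map_ofFn]
  congr 1
  congr 1
  funext i
  simp only [lcCons_succ, Function.comp, Fin.succAbove, Fin.lt_def, Fin.val_castSucc]
  by_cases h : (σ i).val < v.val
  · have : Nat.blt (σ i).val v.val = true := by rw [Nat.blt_eq]; exact h
    simp [h, this]
  · have : Nat.blt (σ i).val v.val = false := by
      rw [Bool.eq_false_iff, ne_eq, Nat.blt_eq]; exact h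
    simp [h, this]

/-- An order-preserving bijection criterion: a left extension is determined by its first value. -/
theorem lcCons_surj {n : ℕ} (π : Equiv.Perm (Fin (n + 1))) :
    ∃ (v : Fin (n + 1)) (σ : Equiv.Perm (Fin n)), lcCons v σ = π := by
  have H : ∀ i : Fin n, ∃ y, (π 0).succAbove y = π i.succ := fun i =>
    Fin.exists_succAbove_eq (fun h => Fin.succ_ne_zero i (π.injective h))
  choose f hf using H
  have hinj : Function.Injective f := fun i j hij =>
    Fin.succ_injective n (π.injective (by rw [← hf, ← hf, hij]))
  refine ⟨π 0, Equiv.ofBijective f (Finite.injective_iff_bijective.1 hinj), ?_⟩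
  ext i
  refine Fin.cases ?_ (fun i => ?_) i
  · rfl
  · rw [lcCons_succ, Equiv.ofBijective_apply, hf]

theorem lc_perm_eq {n : ℕ} (σ τ : Equiv.Perm (Fin n)) (h : ∀ i j, τ i < τ j ↔ σ i < σ j) :
    τ = σ := by
  have hm : StrictMono (σ.symm.trans τ) := fun a b hab => by
    simpa [h] using hab
  have e : (hm.orderIsoOfSurjective _ (σ.symm.trans τ).surjective) = OrderIso.refl (Fin n) :=
    Subsingleton.elim _ _
  ext i
  have := congrArg (fun g : Fin n ≃o Fin n => g (σ i)) e
  simpa using congrArg Fin.val this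

theorem lc_iff {n : ℕ} (σ : Equiv.Perm (Fin n)) :
    LeftCrucial σ ↔ SquareFree σ ∧ ∀ v, v < n + 1 → lcPsq (lcExt v (lcList σ)) = true := by
  unfold LeftCrucial
  refine and_congr_right fun hs => ⟨fun h v hv => ?_, fun h π hπ => ?_⟩
  · have h1 := (lc_contains (lcCons_ext ⟨v, hv⟩ σ)).1 (h _ (lcCons_ext ⟨v, hv⟩ σ))
    rw [lcCons_list] at h1
    exact h1.resolve_right hs
  · obtain ⟨v, τ, rfl⟩ := lcCons_surj π
    have : τ = σ := lc_perm_eq σ τ fun i j => (lcCons_ext v τ i j).symm.trans (hπ i j)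
    subst this
    rw [lc_contains hπ, lcCons_list]
    exact Or.inl (h v v.isLt)

theorem mem_lcSf (n : ℕ) : ∀ l, l ∈ lcSf n ↔ ∃ σ : Equiv.Perm (Fin n), SquareFree σ ∧
    lcList σ = l := by
  induction n with
  | zero =>
    intro l
    simp only [lcSf, List.mem_singleton]
    constructor
    · rintro rfl
      refine ⟨1, ?_, by simp [lcList]⟩
      rintro ⟨k, ℓ, h2, hb, -⟩
      omega
    · rintro ⟨σ, -, rfl⟩
      simp [lcList]
  | succ n ih =>
    intro l
    simp only [lcSf, List.mem_flatMap, List.mem_filter, List.mem_map, List.mem_range,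
      Bool.not_eq_true', ih]
    constructor
    · rintro ⟨_, ⟨σ, hs, rfl⟩, ⟨v, hv, rfl⟩, hp⟩
      refine ⟨lcCons ⟨v, hv⟩ σ, ?_, lcCons_list _ _⟩
      unfold SquareFree
      rw [lc_contains (lcCons_ext _ σ), lcCons_list]
      rintro (h | h)
      · simp [hp] at h
      · exact hs h
    · rintro ⟨π, hs, rfl⟩
      obtain ⟨v, σ, rfl⟩ := lcCons_surj π
      unfold SquareFree at hs
      rw [lc_contains (lcCons_ext v σ), not_or, Bool.not_eq_true] at hs
      exact ⟨_, ⟨σ, hs.2, rfl⟩, ⟨v, v.isLt, (lcCons_list v σ).symm⟩, hs.1⟩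

theorem mem_lcAll (n : ℕ) (l : List ℕ) :
    l ∈ lcAll n ↔ ∃ σ : Equiv.Perm (Fin n), LeftCrucial σ ∧ lcList σ = l := by
  simp only [lcAll, List.mem_filter, mem_lcSf, List.all_eq_true, List.mem_range, lc_iff]
  constructor
  · rintro ⟨⟨σ, hs, rfl⟩, h⟩
    exact ⟨σ, ⟨hs, h⟩, rfl⟩
  · rintro ⟨σ, ⟨hs, h⟩, rfl⟩
    exact ⟨⟨σ, hs, rfl⟩, h⟩

theorem lcAll_small : ∀ n, n < 7 → lcAll n = [] := by decide +kernel

theorem lcAll_card : (lcAll 7).toFinset.card = 60 := by decide +kernel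

/-- The number of left-crucial permutations of length 7 is exactly 60, and there are no
left-crucial permutations of any length `n ≤ 6`. -/
theorem card_leftCrucial_7 :
    Nat.card {σ : Equiv.Perm (Fin 7) // LeftCrucial σ} = 60 ∧
    ∀ n : ℕ, n ≤ 6 → ∀ σ : Equiv.Perm (Fin n), ¬ LeftCrucial σ := by
  constructor
  · rw [← lcAll_card, ← Fintype.card_coe, ← Nat.card_eq_fintype_card]
    refine Nat.card_congr (Equiv.ofBijective
      (fun s => ⟨lcList s.1, List.mem_toFinset.2 ((mem_lcAll 7 _).2 ⟨s.1, s.2, rfl⟩)⟩) ⟨?_, ?_⟩)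
    · intro s t h
      exact Subtype.ext (lcList_inj (congrArg Subtype.val h))
    · rintro ⟨l, hl⟩
      obtain ⟨σ, hσ, rfl⟩ := (mem_lcAll 7 l).1 (List.mem_toFinset.1 hl)
      exact ⟨⟨σ, hσ⟩, rfl⟩
  · intro n hn σ hσ
    have : lcList σ ∈ lcAll n := (mem_lcAll n _).2 ⟨σ, hσ, rfl⟩
    rw [lcAll_small n (by omega)] at this
    simp at this
end

section
/- The number of square-free permutations of length 9 is exactly 3980. -/
/-- Boolean equality. -/
def sfEqb (x y : Bool) : Bool := cond x y (cond y false true)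

/-- `a` does not occur in `p`. -/
def sfFresh (a : ℕ) (p : List ℕ) : Bool :=
  @List.rec ℕ (fun _ => Bool) true (fun b _ ih => cond (Nat.beq a b) false ih) p

/-- Squares of half-length two (for distinct entries). -/
def sfSq2 (a b c d : ℕ) : Bool := sfEqb (Nat.ble a b) (Nat.ble c d)

/-- Squares of half-length three (for distinct entries). -/
def sfSq3 (a b c d e f : ℕ) : Bool :=
  cond (sfSq2 a b d e) (cond (sfSq2 b c e f) (sfSq2 a c d f) false) false

/-- Squares of half-length four (for distinct entries). -/
def sfSq4 (a b c d e f g h : ℕ) : Bool :=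
  cond (sfSq3 a b c e f g)
    (cond (sfSq2 c d g h) (cond (sfSq2 b d f h) (sfSq2 a d e h) false) false) false

/-- No square of half-length at most four starts at the head of `a :: p`. -/
def sfNoSq (a : ℕ) (p : List ℕ) : Bool :=
  match p with
  | b :: c :: d :: t =>
    cond (sfSq2 a b c d) false
      (match t with
      | e :: f :: u =>
        cond (sfSq3 a b c d e f) false
          (match u with
          | g :: h :: _ => cond (sfSq4 a b c d e f g h) false true
          | _ => true)
      | _ => true)
  | _ => true

/-- `p` may be extended to the left by `a`. -/
def sfGood (a : ℕ) (p : List ℕ) : Bool := cond (sfFresh a p) (sfNoSq a p) false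

/-- Remove `a` from a list. -/
def sfDel (a : ℕ) (r : List ℕ) : List ℕ :=
  @List.rec ℕ (fun _ => List ℕ) [] (fun b _ ih => cond (Nat.beq a b) ih (b :: ih)) r

/-- One step of the search: sum over all extensions of `p` by an entry of `s`. -/
def sfStep (f : List ℕ → List ℕ → ℕ) (p r s : List ℕ) : ℕ :=
  @List.rec ℕ (fun _ => ℕ) 0
    (fun a _ ih => cond (sfNoSq a p) (Nat.add (f (a :: p) (sfDel a r)) ih) ih) s

/-- The number of extensions by `k` further entries, where `r` lists the unused values. -/
def sfCount (k : ℕ) : List ℕ → List ℕ → ℕ :=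
  @Nat.rec (fun _ => List ℕ → List ℕ → ℕ) (fun _ _ => 1) (fun _ f p r => sfStep f p r r) k

theorem sfCount_nine : sfCount 9 [] [nat_lit 0, nat_lit 1, nat_lit 2, nat_lit 3, nat_lit 4,
    nat_lit 5, nat_lit 6, nat_lit 7, nat_lit 8] = 3980 := by decide +kernel

/-- The list of extensions by `k` further entries. -/
def sfExt : ℕ → List ℕ → List (List ℕ)
  | 0, p => [p]
  | k + 1, p => (List.range 9).flatMap fun a => if sfGood a p = true then sfExt k (a :: p) else []

/-- All entries are legal. -/
def sfAll : List ℕ → Prop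
  | [] => True
  | a :: p => a < 9 ∧ sfGood a p = true ∧ sfAll p

theorem sfFresh_iff (a : ℕ) (p : List ℕ) : sfFresh a p = true ↔ a ∉ p := by
  induction p with
  | nil => simp [sfFresh]
  | cons b p ih =>
    have : sfFresh a (b :: p) = cond (Nat.beq a b) false (sfFresh a p) := rfl
    rw [this, List.mem_cons, not_or, ← ih]
    by_cases h : a = b
    · simp [h]
    · have : Nat.beq a b = false := by
        rw [← Bool.not_eq_true, Nat.beq_eq]; exact h
      simp [this, h]

theorem sfGood_iff (a : ℕ) (p : List ℕ) :
    sfGood a p = true ↔ a ∉ p ∧ sfNoSq a p = true := by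
  rw [← sfFresh_iff, sfGood]
  cases sfFresh a p <;> simp

theorem sfDel_eq (a : ℕ) (r : List ℕ) : sfDel a r = r.filter fun b => decide (b ≠ a) := by
  induction r with
  | nil => rfl
  | cons b r ih =>
    have h : sfDel a (b :: r) = cond (Nat.beq a b) (sfDel a r) (b :: sfDel a r) := rfl
    rw [h, ih]
    by_cases hab : a = b
    · subst hab; simp
    · have h1 : Nat.beq a b = false := by
        rw [← Bool.not_eq_true, Nat.beq_eq]; exact hab
      have h2 : b ≠ a := fun h => hab h.symm
      simp [h1, h2]

theorem sfStep_eq (f : List ℕ → List ℕ → ℕ) (p r s : List ℕ) : sfStep f p r s =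
    (s.map fun a => if sfNoSq a p = true then f (a :: p) (sfDel a r) else 0).sum := by
  induction s with
  | nil => rfl
  | cons a s ih =>
    have h : sfStep f p r (a :: s) = cond (sfNoSq a p)
      (Nat.add (f (a :: p) (sfDel a r)) (sfStep f p r s)) (sfStep f p r s) := rfl
    rw [h, ih]
    cases hc : sfNoSq a p <;> simp [hc]

theorem sum_map_filter_ite (s : List ℕ) (P : ℕ → Prop) [DecidablePred P] (g : ℕ → ℕ) :
    ((s.filter fun a => decide (P a)).map g).sum = (s.map fun a => if P a then g a else 0).sum := by
  induction s with
  | nil => rfl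
  | cons a s ih => by_cases h : P a <;> simp [h, ih]

theorem sfExt_length (k : ℕ) : ∀ p, (sfExt k p).length =
    sfCount k p ((List.range 9).filter fun b => decide (b ∉ p)) := by
  induction k with
  | zero => intro p; rfl
  | succ k ih =>
    intro p
    have h2 : ∀ r, sfCount (k + 1) p r = sfStep (sfCount k) p r r := fun _ => rfl
    rw [h2, sfStep_eq, sum_map_filter_ite, sfExt, List.length_flatMap]
    congr 1
    apply List.map_congr_left
    intro a _
    have h3 : sfDel a ((List.range 9).filter fun b => decide (b ∉ p)) =
        (List.range 9).filter fun b => decide (b ∉ a :: p) := by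
      rw [sfDel_eq, List.filter_filter]
      congr 1
      funext b
      simp
    rw [h3, ← ih]
    simp only [sfGood_iff]
    by_cases h4 : a ∈ p <;> by_cases h5 : sfNoSq a p = true <;> simp [h4, h5]

theorem sfExt_suffix (k : ℕ) : ∀ p q, q ∈ sfExt k p →
    p <:+ q ∧ q.length = k + p.length ∧ (sfAll p → sfAll q) := by
  induction k with
  | zero => intro p q h; simp [sfExt] at h; subst h; simp
  | succ k ih =>
    intro p q h
    simp only [sfExt, List.mem_flatMap, List.mem_range] at h
    obtain ⟨a, ha, h⟩ := h
    split_ifs at h with hg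
    · obtain ⟨h1, h2, h3⟩ := ih _ _ h
      refine ⟨(List.suffix_cons a p).trans h1, by simp at h2; omega, fun hp => h3 ⟨ha, hg, hp⟩⟩
    · simp at h

theorem sfExt_nodup (k : ℕ) : ∀ p, (sfExt k p).Nodup := by
  induction k with
  | zero => intro p; simp [sfExt]
  | succ k ih =>
    intro p
    rw [sfExt, List.nodup_flatMap]
    refine ⟨fun a _ => by split_ifs <;> simp [ih], ?_⟩
    refine List.Nodup.pairwise_of_forall_ne List.nodup_range ?_
    intro a _ b _ hab
    simp only [Function.onFun]
    intro q h1 h2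
    split_ifs at h1 h2 <;> try simp at h1 h2
    have e1 := (sfExt_suffix k _ _ h1).1
    have e2 := (sfExt_suffix k _ _ h2).1
    have := List.suffix_of_suffix_length_le e1 e2 (by simp)
    have := this.eq_of_length (by simp)
    simp at this
    exact hab this

theorem sfAll_suffix (s p : List ℕ) (h : sfAll (s ++ p)) : sfAll p := by
  induction s with
  | nil => exact h
  | cons a s ih => exact ih h.2.2

theorem mem_sfExt (k : ℕ) : ∀ p s, s.length = k → sfAll (s ++ p) → s ++ p ∈ sfExt k p := by
  induction k with
  | zero => intro p s h _; simp at h; subst h; simp [sfExt]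
  | succ k ih =>
    intro p s hs h
    obtain ⟨t, a, rfl⟩ : ∃ t a, s = t ++ [a] := by
      rcases List.eq_nil_or_concat s with h | ⟨t, a, h⟩
      · simp [h] at hs
      · exact ⟨t, a, by simpa using h⟩
    simp only [List.append_assoc, List.singleton_append] at h ⊢
    have h1 := sfAll_suffix _ _ h
    simp only [sfExt, List.mem_flatMap, List.mem_range]
    refine ⟨a, h1.1, ?_⟩
    rw [if_pos h1.2.1]
    exact ih _ _ (by simpa using hs) h

theorem sfAll_nodup (p : List ℕ) (h : sfAll p) : p.Nodup ∧ ∀ a ∈ p, a < 9 := by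
  induction p with
  | nil => simp
  | cons a p ih =>
    obtain ⟨h1, h2, h3⟩ := h
    have : sfFresh a p = true := by
      unfold sfGood at h2
      cases h : sfFresh a p <;> simp_all
    rw [sfFresh_iff] at this
    have := ih h3
    simp_all

theorem sfSq2_iff (a b c d : ℕ) : sfSq2 a b c d = true ↔ (a ≤ b ↔ c ≤ d) := by
  rw [← Nat.ble_eq, ← Nat.ble_eq, sfSq2]
  cases Nat.ble a b <;> cases Nat.ble c d <;> simp [sfEqb]

theorem sfSq3_iff (a b c d e f : ℕ) : sfSq3 a b c d e f = true ↔
    (a ≤ b ↔ d ≤ e) ∧ (b ≤ c ↔ e ≤ f) ∧ (a ≤ c ↔ d ≤ f) := by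
  simp only [sfSq3, ← sfSq2_iff]
  cases sfSq2 a b d e <;> cases sfSq2 b c e f <;> simp

theorem sfSq4_iff (a b c d e f g h : ℕ) : sfSq4 a b c d e f g h = true ↔
    ((a ≤ b ↔ e ≤ f) ∧ (b ≤ c ↔ f ≤ g) ∧ (a ≤ c ↔ e ≤ g)) ∧
      (c ≤ d ↔ g ≤ h) ∧ (b ≤ d ↔ f ≤ h) ∧ (a ≤ d ↔ e ≤ h) := by
  rw [← sfSq3_iff]
  simp only [sfSq4, ← sfSq2_iff]
  cases sfSq3 a b c e f g <;> cases sfSq2 c d g h <;> cases sfSq2 b d f h <;> simp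

/-- With injectivity, only pairs `i < j` matter, and `≤` may replace `<`. -/
theorem hasSquareAt_iff_s19 (σ : Equiv.Perm (Fin 9)) (k ℓ : ℕ) (hl : 2 ≤ ℓ) (hb : k + 2 * ℓ ≤ 9) :
    HasSquareAt ⇑σ k ℓ ↔ ∀ i j : Fin ℓ, i < j →
      ((σ ⟨k + i, by omega⟩).val ≤ (σ ⟨k + j, by omega⟩).val ↔
        (σ ⟨k + ℓ + i, by omega⟩).val ≤ (σ ⟨k + ℓ + j, by omega⟩).val) := by
  have inj : ∀ (x y : ℕ) (hx : x < 9) (hy : y < 9), x ≠ y → (σ ⟨x, hx⟩).val ≠ (σ ⟨y, hy⟩).val := by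
    intro x y hx hy hxy h
    have := σ.injective (Fin.ext h)
    simp at this
    exact hxy this
  constructor
  · rintro ⟨_, _, h⟩ i j hij
    have h1 := h i j i.2 j.2
    have hij : i.val < j.val := hij
    have h2 := inj (k + i) (k + j) (by omega) (by omega) (by omega)
    have h3 := inj (k + ℓ + i) (k + ℓ + j) (by omega) (by omega) (by omega)
    rw [Fin.lt_def, Fin.lt_def] at h1
    omega
  · intro h
    refine ⟨hl, hb, ?_⟩
    intro i j hi hj
    rw [Fin.lt_def, Fin.lt_def]
    rcases lt_trichotomy i j with hij | hij | hij
    · have h1 := h ⟨i, hi⟩ ⟨j, hj⟩ hij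
      have h2 := inj (k + i) (k + j) (by omega) (by omega) (by omega)
      have h3 := inj (k + ℓ + i) (k + ℓ + j) (by omega) (by omega) (by omega)
      simp only at h1
      omega
    · subst hij; simp
    · have h1 := h ⟨j, hj⟩ ⟨i, hi⟩ hij
      have h2 := inj (k + i) (k + j) (by omega) (by omega) (by omega)
      have h3 := inj (k + ℓ + i) (k + ℓ + j) (by omega) (by omega) (by omega)
      simp only at h1
      omega

/-- The word of a permutation. -/
def sfWord (σ : Equiv.Perm (Fin 9)) : List ℕ := List.ofFn fun i => (σ i).val

theorem sq2_at (σ : Equiv.Perm (Fin 9)) (k : ℕ) (hb : k + 4 ≤ 9) :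
    HasSquareAt ⇑σ k 2 ↔ sfSq2 (σ ⟨k, by omega⟩) (σ ⟨k + 1, by omega⟩) (σ ⟨k + 2, by omega⟩)
      (σ ⟨k + 3, by omega⟩) = true := by
  rw [hasSquareAt_iff_s19 σ k 2 (by norm_num) hb, sfSq2_iff]
  simp [Fin.forall_fin_succ, Nat.add_assoc]

theorem sq3_at (σ : Equiv.Perm (Fin 9)) (k : ℕ) (hb : k + 6 ≤ 9) :
    HasSquareAt ⇑σ k 3 ↔ sfSq3 (σ ⟨k, by omega⟩) (σ ⟨k + 1, by omega⟩) (σ ⟨k + 2, by omega⟩)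
      (σ ⟨k + 3, by omega⟩) (σ ⟨k + 4, by omega⟩) (σ ⟨k + 5, by omega⟩) = true := by
  rw [hasSquareAt_iff_s19 σ k 3 (by norm_num) hb, sfSq3_iff]
  simp [Fin.forall_fin_succ, Nat.add_assoc]
  tauto

theorem sq4_at (σ : Equiv.Perm (Fin 9)) (k : ℕ) (hb : k + 8 ≤ 9) :
    HasSquareAt ⇑σ k 4 ↔ sfSq4 (σ ⟨k, by omega⟩) (σ ⟨k + 1, by omega⟩) (σ ⟨k + 2, by omega⟩)
      (σ ⟨k + 3, by omega⟩) (σ ⟨k + 4, by omega⟩) (σ ⟨k + 5, by omega⟩) (σ ⟨k + 6, by omega⟩)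
      (σ ⟨k + 7, by omega⟩) = true := by
  rw [hasSquareAt_iff_s19 σ k 4 (by norm_num) hb, sfSq4_iff]
  simp [Fin.forall_fin_succ, Nat.add_assoc]
  constructor
  · rintro ⟨⟨h1, h2, h3⟩, ⟨h4, h5⟩, h6⟩
    exact ⟨⟨h1, h4, h2⟩, h6, h5, h3⟩
  · rintro ⟨⟨h1, h4, h2⟩, h6, h5, h3⟩
    exact ⟨⟨h1, h2, h3⟩, ⟨h4, h5⟩, h6⟩

theorem squareFree_iff_list (σ : Equiv.Perm (Fin 9)) : SquareFree ⇑σ ↔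
    (∀ k, k < 6 → ¬ HasSquareAt ⇑σ k 2) ∧ (∀ k, k < 4 → ¬ HasSquareAt ⇑σ k 3) ∧
      (∀ k, k < 2 → ¬ HasSquareAt ⇑σ k 4) := by
  constructor
  · intro h
    exact ⟨fun k _ hk => h ⟨k, _, hk⟩, fun k _ hk => h ⟨k, _, hk⟩, fun k _ hk => h ⟨k, _, hk⟩⟩
  · rintro ⟨h2, h3, h4⟩ ⟨k, l, h⟩
    have hl := h.1
    have hb := h.2.1
    have : l = 2 ∨ l = 3 ∨ l = 4 := by omega
    rcases this with rfl | rfl | rfl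
    · exact h2 k (by omega) h
    · exact h3 k (by omega) h
    · exact h4 k (by omega) h

theorem cond_false_iff (x y : Bool) : cond x false y = true ↔ ¬ x = true ∧ y = true := by
  cases x <;> simp

theorem squareFree_iff_sfAll (σ : Equiv.Perm (Fin 9)) :
    SquareFree ⇑σ ↔ sfAll (sfWord σ) := by
  have hn : (sfWord σ).Nodup :=
    List.nodup_ofFn.2 (Fin.val_injective.comp σ.injective)
  have hw : sfWord σ = [(σ 0).val, (σ 1).val, (σ 2).val, (σ 3).val, (σ 4).val, (σ 5).val,
    (σ 6).val, (σ 7).val, (σ 8).val] := by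
    simp [sfWord, List.ofFn_succ]
  rw [hw] at hn ⊢
  have key : ∀ a p, (a :: p).Nodup → a < 9 → (sfAll (a :: p) ↔ sfNoSq a p = true ∧ sfAll p) := by
    intro a p h ha
    rw [sfAll, sfGood_iff]
    have := (List.nodup_cons.1 h).1
    tauto
  have e0 := key _ _ hn (σ 0).2
  have n1 := (List.nodup_cons.1 hn).2
  have e1 := key _ _ n1 (σ 1).2
  have n2 := (List.nodup_cons.1 n1).2
  have e2 := key _ _ n2 (σ 2).2
  have n3 := (List.nodup_cons.1 n2).2
  have e3 := key _ _ n3 (σ 3).2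
  have n4 := (List.nodup_cons.1 n3).2
  have e4 := key _ _ n4 (σ 4).2
  have n5 := (List.nodup_cons.1 n4).2
  have e5 := key _ _ n5 (σ 5).2
  have n6 := (List.nodup_cons.1 n5).2
  have e6 := key _ _ n6 (σ 6).2
  have n7 := (List.nodup_cons.1 n6).2
  have e7 := key _ _ n7 (σ 7).2
  have n8 := (List.nodup_cons.1 n7).2
  have e8 := key _ _ n8 (σ 8).2
  rw [e0, e1, e2, e3, e4, e5, e6, e7, e8, squareFree_iff_list]
  clear e0 e1 e2 e3 e4 e5 e6 e7 e8 n1 n2 n3 n4 n5 n6 n7 n8 hn hw key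
  have a2 : (∀ k, k < 6 → ¬ HasSquareAt ⇑σ k 2) ↔ ¬ HasSquareAt ⇑σ 0 2 ∧ ¬ HasSquareAt ⇑σ 1 2 ∧
      ¬ HasSquareAt ⇑σ 2 2 ∧ ¬ HasSquareAt ⇑σ 3 2 ∧ ¬ HasSquareAt ⇑σ 4 2 ∧
      ¬ HasSquareAt ⇑σ 5 2 := by
    constructor
    · intro h
      exact ⟨h 0 (by norm_num), h 1 (by norm_num), h 2 (by norm_num), h 3 (by norm_num),
        h 4 (by norm_num), h 5 (by norm_num)⟩
    · rintro ⟨h0, h1, h2, h3, h4, h5⟩ k hk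
      interval_cases k <;> assumption
  have a3 : (∀ k, k < 4 → ¬ HasSquareAt ⇑σ k 3) ↔ ¬ HasSquareAt ⇑σ 0 3 ∧ ¬ HasSquareAt ⇑σ 1 3 ∧
      ¬ HasSquareAt ⇑σ 2 3 ∧ ¬ HasSquareAt ⇑σ 3 3 := by
    constructor
    · intro h
      exact ⟨h 0 (by norm_num), h 1 (by norm_num), h 2 (by norm_num), h 3 (by norm_num)⟩
    · rintro ⟨h0, h1, h2, h3⟩ k hk
      interval_cases k <;> assumption
  have a4 : (∀ k, k < 2 → ¬ HasSquareAt ⇑σ k 4) ↔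
      ¬ HasSquareAt ⇑σ 0 4 ∧ ¬ HasSquareAt ⇑σ 1 4 := by
    constructor
    · intro h
      exact ⟨h 0 (by norm_num), h 1 (by norm_num)⟩
    · rintro ⟨h0, h1⟩ k hk
      interval_cases k <;> assumption
  rw [a2, a3, a4, sq2_at σ 0 (by norm_num), sq2_at σ 1 (by norm_num), sq2_at σ 2 (by norm_num),
    sq2_at σ 3 (by norm_num), sq2_at σ 4 (by norm_num), sq2_at σ 5 (by norm_num),
    sq3_at σ 0 (by norm_num), sq3_at σ 1 (by norm_num), sq3_at σ 2 (by norm_num),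
    sq3_at σ 3 (by norm_num), sq4_at σ 0 (by norm_num), sq4_at σ 1 (by norm_num)]
  simp only [sfNoSq, cond_false_iff, sfAll, and_true, Nat.zero_add, Nat.reduceAdd]
  have f0 : (⟨0, by omega⟩ : Fin 9) = 0 := rfl
  have f1 : (⟨1, by omega⟩ : Fin 9) = 1 := rfl
  have f2 : (⟨2, by omega⟩ : Fin 9) = 2 := rfl
  have f3 : (⟨3, by omega⟩ : Fin 9) = 3 := rfl
  have f4 : (⟨4, by omega⟩ : Fin 9) = 4 := rfl
  have f5 : (⟨5, by omega⟩ : Fin 9) = 5 := rfl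
  have f6 : (⟨6, by omega⟩ : Fin 9) = 6 := rfl
  have f7 : (⟨7, by omega⟩ : Fin 9) = 7 := rfl
  have f8 : (⟨8, by omega⟩ : Fin 9) = 8 := rfl
  simp only [f0, f1, f2, f3, f4, f5, f6, f7, f8]
  constructor
  · rintro ⟨⟨h1, h2, h3, h4, h5, h6⟩, ⟨h7, h8, h9, h10⟩, h11, h12⟩
    exact ⟨⟨h1, h7, h11⟩, ⟨h2, h8, h12⟩, ⟨h3, h9⟩, ⟨h4, h10⟩, h5, h6⟩
  · rintro ⟨⟨h1, h7, h11⟩, ⟨h2, h8, h12⟩, ⟨h3, h9⟩, ⟨h4, h10⟩, h5, h6⟩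
    exact ⟨⟨h1, h2, h3, h4, h5, h6⟩, ⟨h7, h8, h9, h10⟩, h11, h12⟩

theorem sfWord_injective : Function.Injective sfWord := by
  intro σ τ h
  have := List.ofFn_injective h
  ext i
  exact congrFun this i

theorem sfWord_surj (q : List ℕ) (hl : q.length = 9) (h : sfAll q) : ∃ σ, sfWord σ = q := by
  obtain ⟨hn, hlt⟩ := sfAll_nodup q h
  let f : Fin 9 → Fin 9 := fun i => ⟨q[i.val]'(by omega), hlt _ (List.getElem_mem _)⟩
  have hf : Function.Injective f := by
    intro i j hij
    have : q[i.val]'(by omega) = q[j.val]'(by omega) := congrArg Fin.val hij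
    exact Fin.ext ((hn.getElem_inj_iff).1 this)
  refine ⟨Equiv.ofBijective f (Finite.injective_iff_bijective.1 hf), ?_⟩
  apply List.ext_getElem
  · simp [sfWord, hl]
  · intro i h1 h2
    simp only [sfWord, List.getElem_ofFn, Equiv.ofBijective_apply, f]

/-- The number of square-free permutations of length 9 is exactly 3980. -/
theorem card_squareFree_9 :
    Nat.card {σ : Equiv.Perm (Fin 9) // SquareFree ⇑σ} = 3980 := by
  have hmem : ∀ σ : Equiv.Perm (Fin 9), SquareFree ⇑σ → sfWord σ ∈ (sfExt 9 []).toFinset := by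
    intro σ h
    rw [List.mem_toFinset]
    have := mem_sfExt 9 [] (sfWord σ) (by simp [sfWord])
      (by rw [List.append_nil]; exact (squareFree_iff_sfAll σ).1 h)
    rwa [List.append_nil] at this
  let f : {σ : Equiv.Perm (Fin 9) // SquareFree ⇑σ} → {q // q ∈ (sfExt 9 []).toFinset} :=
    fun σ => ⟨sfWord σ.1, hmem σ.1 σ.2⟩
  have hf : Function.Bijective f := by
    constructor
    · intro σ τ h
      exact Subtype.ext (sfWord_injective (congrArg Subtype.val h))
    · rintro ⟨q, hq⟩
      obtain ⟨_, h1, h2⟩ := sfExt_suffix 9 [] q (List.mem_toFinset.1 hq)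
      have hall := h2 trivial
      obtain ⟨σ, rfl⟩ := sfWord_surj q h1 hall
      exact ⟨⟨σ, (squareFree_iff_sfAll σ).2 hall⟩, rfl⟩
  rw [Nat.card_congr (Equiv.ofBijective f hf), Nat.card_eq_fintype_card]
  rw [Fintype.card_coe, List.toFinset_card_of_nodup (sfExt_nodup 9 []),
    sfExt_length]
  exact sfCount_nine
end
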